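/- Let q ≥ 3, k ≥ 5 (or q ≥ 5, k ≥ 6), and let Y be an intersecting family of k-dimensional subspaces of F_q^{2k} with |Y| ≥ (1 + 3q^{−1})·[k choose 1]_q·[2k−2 choose k−2]_q. Let s be the minimum dimension of a subspace of F_q^{2k} meeting every member of Y nontrivially. Then s = 1 or s = k. -/

import Mathlib

/-- The Gaussian binomial coefficient `[n choose k]_q`. -/
def gaussBinom (q n k : ℕ) : ℚ :=
  ∏ i ∈ Finset.range k, ((q : ℚ) ^ (n - i) - 1) / ((q : ℚ) ^ (i + 1) - 1)

/-!
Let `S` be a subspace of minimum dimension `s` meeting every member of `Y`, and suppose that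
`2 ≤ s < k`. The members through a subspace `W` with `dim W < s` are few: `W` misses some member
`R`, so each of them contains `W ⊔ P` for one of the `[k choose 1]_q` points `P` of `R`, and this
can be repeated until the dimension reaches `s`. Moreover, for two distinct points `P` and `Q`, the
members through `P` only and those through `Q` only project onto cross-intersecting families of
`(k - 1)`-spaces of the `2(k - 1)`-dimensional quotient by `P ⊔ Q`. By Tokushige's bound, one of the
two points lies on very few members. Hence all points of `S` except possibly one are poor, and
summing over the points of `S` contradicts the size of `Y`. It suffices to branch once if `s = 2`
and twice if `s ≥ 3`.

In dimension `2m`, Tokushige's bound is the expander mixing lemma for the complementarity matrix `K`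
of `m`-spaces. After splitting off its eigenvectors coming from points, the row sums of
`K ^ 2 - a J - b Mᵀ M`, where `M` is the point-subspace incidence matrix and `a`, `b` are chosen to
make the entries nonnegative, bound the remaining eigenvalues.
-/

open Module

section GaussBinom

variable {q n k : ℕ}

theorem prod_pow_succ_sub_one_ne_zero (hq : 1 < q) (k : ℕ) :
    ∏ i ∈ Finset.range k, ((q : ℚ) ^ (i + 1) - 1) ≠ 0 :=
  Finset.prod_ne_zero_iff.2 fun i _ =>
    (sub_pos.2 (one_lt_pow₀ (by exact_mod_cast hq) i.succ_ne_zero)).ne'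

theorem gaussBinom_eq_zero_of_lt (h : n < k) : gaussBinom q n k = 0 :=
  Finset.prod_eq_zero (Finset.mem_range.2 h) (by simp)

theorem gaussBinom_pos (hq : 1 < q) (hk : k ≤ n) : 0 < gaussBinom q n k := by
  have hq' : (1 : ℚ) < q := by exact_mod_cast hq
  refine Finset.prod_pos fun i hi => ?_
  have hi' := Finset.mem_range.1 hi
  exact div_pos (sub_pos.2 (one_lt_pow₀ hq' (by omega))) (sub_pos.2 (one_lt_pow₀ hq' (by omega)))

theorem gaussBinom_one_mul (hq : 1 < q) (n : ℕ) : gaussBinom q n 1 * ((q : ℚ) - 1) = q ^ n - 1 := by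
  have hq' : (q : ℚ) - 1 ≠ 0 := (sub_pos.2 (by exact_mod_cast hq)).ne'
  simp [gaussBinom, hq']

theorem gaussBinom_succ_right_mul (hq : 1 < q) (n k : ℕ) :
    gaussBinom q n (k + 1) * ((q : ℚ) ^ (k + 1) - 1)
      = gaussBinom q n k * ((q : ℚ) ^ (n - k) - 1) := by
  have hne : (q : ℚ) ^ (k + 1) - 1 ≠ 0 :=
    (sub_pos.2 (one_lt_pow₀ (by exact_mod_cast hq) k.succ_ne_zero)).ne'
  rw [gaussBinom, Finset.prod_range_succ, gaussBinom, mul_assoc, div_mul_cancel₀ _ hne]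

theorem gaussBinom_succ_succ_mul (hq : 1 < q) (n k : ℕ) :
    gaussBinom q (n + 1) (k + 1) * ((q : ℚ) ^ (k + 1) - 1)
      = gaussBinom q n k * ((q : ℚ) ^ (n + 1) - 1) := by
  have hk := prod_pow_succ_sub_one_ne_zero hq k
  have hk' := prod_pow_succ_sub_one_ne_zero hq (k + 1)
  rw [gaussBinom, gaussBinom, Finset.prod_div_distrib, Finset.prod_div_distrib,
    Finset.prod_range_succ']
  rw [Finset.prod_range_succ] at hk' ⊢
  simp only [Nat.add_sub_add_right, Nat.sub_zero]
  have := right_ne_zero_of_mul hk'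
  field_simp

theorem prod_pow_sub_pow (hk : k ≤ n) : ∏ i ∈ Finset.range k, ((q : ℚ) ^ n - q ^ i)
    = (∏ i ∈ Finset.range k, (q : ℚ) ^ i) * ∏ i ∈ Finset.range k, ((q : ℚ) ^ (n - i) - 1) := by
  rw [← Finset.prod_mul_distrib]
  refine Finset.prod_congr rfl fun i hi => ?_
  have := Finset.mem_range.1 hi
  rw [mul_sub, mul_one, ← pow_add, Nat.add_sub_cancel' (by omega)]

theorem gaussBinom_mul_prod_pow_sub_pow (hq : 1 < q) (hk : k ≤ n) :
    gaussBinom q n k * ∏ i ∈ Finset.range k, ((q : ℚ) ^ k - q ^ i)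
      = ∏ i ∈ Finset.range k, ((q : ℚ) ^ n - q ^ i) := by
  have hreflect : ∏ i ∈ Finset.range k, ((q : ℚ) ^ (k - i) - 1)
      = ∏ i ∈ Finset.range k, ((q : ℚ) ^ (i + 1) - 1) := by
    rw [← Finset.prod_range_reflect]
    refine Finset.prod_congr rfl fun i hi => ?_
    have := Finset.mem_range.1 hi
    rw [show k - (k - 1 - i) = i + 1 by omega]
  have := prod_pow_succ_sub_one_ne_zero hq k
  rw [prod_pow_sub_pow hk, prod_pow_sub_pow le_rfl, gaussBinom, Finset.prod_div_distrib, hreflect]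
  field_simp

theorem gaussBinom_two_mul (hq : 1 < q) {m : ℕ} (hm : 0 < m) :
    gaussBinom q (2 * m) m = gaussBinom q (2 * m - 1) (m - 1) * ((q : ℚ) ^ m + 1) := by
  obtain ⟨l, rfl⟩ := Nat.exists_eq_add_one.2 hm
  have h := gaussBinom_succ_succ_mul hq (2 * l + 1) l
  have hpow : (1 : ℚ) < (q : ℚ) ^ (l + 1) := one_lt_pow₀ (mod_cast hq) l.succ_ne_zero
  refine mul_right_cancel₀ (sub_pos.2 hpow).ne' (h.trans ?_)
  rw [mul_assoc]
  change gaussBinom q (2 * l + 1) l * _ = gaussBinom q (2 * l + 1) l * _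
  congr 1
  ring

end GaussBinom

section Counting

theorem finrank_map_mkQ_add {F V : Type*} [Field F] [AddCommGroup V] [Module F V]
    [FiniteDimensional F V] {W R : Submodule F V} (h : W ≤ R) :
    finrank F (R.map W.mkQ) + finrank F W = finrank F R := by
  have := (W.mkQ.domRestrict R).finrank_range_add_finrank_ker
  rwa [LinearMap.range_domRestrict, LinearMap.ker_domRestrict, Submodule.ker_mkQ,
    (Submodule.comapSubtypeEquivOfLe h).finrank_eq] at this

variable {F V W : Type*} [Field F] [Fintype F] [AddCommGroup V] [Module F V] [Finite V]
  [AddCommGroup W] [Module F W] [Finite W]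

theorem ncard_preimage_eq_mul_natCard_ker {X Z : Type*} [AddGroup X] [AddGroup Z] (f : X →+ Z)
    (hf : Function.Surjective f) (T : Set Z) :
    (f ⁻¹' T).ncard = T.ncard * Nat.card f.ker := by
  rw [← Nat.card_coe_set_eq, ← Nat.card_coe_set_eq, ← Nat.card_prod]
  have hs := Function.surjInv_eq hf
  exact Nat.card_congr
    { toFun := fun x => (⟨f x, x.2⟩, ⟨x - Function.surjInv hf (f x), by simp [hs]⟩)
      invFun := fun y => ⟨y.2 + Function.surjInv hf y.1, by simp [hs, f.mem_ker.1 y.2.2]⟩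
      left_inv := fun x => by simp
      right_inv := fun y => by ext <;> simp [hs, f.mem_ker.1 y.2.2] }

theorem ncard_preimage_mul_natCard {X Z : Type*} [AddGroup X] [AddGroup Z] (f : X →+ Z)
    (hf : Function.Surjective f) (T : Set Z) :
    (f ⁻¹' T).ncard * Nat.card Z = T.ncard * Nat.card X := by
  have huniv := ncard_preimage_eq_mul_natCard_ker f hf Set.univ
  rw [Set.preimage_univ, Set.ncard_univ, Set.ncard_univ] at huniv
  rw [huniv, ncard_preimage_eq_mul_natCard_ker f hf]
  ring

theorem natCard_linearMap :
    Nat.card (V →ₗ[F] W) = Fintype.card F ^ (finrank F V * finrank F W) := by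
  rw [Module.natCard_eq_pow_finrank (K := F), Nat.card_eq_fintype_card, finrank_linearMap]

theorem ncard_setOf_injective (h : finrank F V ≤ finrank F W) :
    {f : V →ₗ[F] W | Function.Injective f}.ncard
      = ∏ i : Fin (finrank F V), (Fintype.card F ^ finrank F W - Fintype.card F ^ (i : ℕ)) := by
  have b := finBasis F V
  rw [← card_linearIndependent h, ← Nat.card_coe_set_eq]
  refine Nat.card_congr (Equiv.subtypeEquiv (b.constr F).symm.toEquiv fun f => ?_)
  have hcomb : Finsupp.linearCombination F (f ∘ b) = f ∘ₗ b.repr.symm.toLinearMap := by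
    ext i; simp
  change _ ↔ LinearIndependent F (f ∘ b)
  rw [LinearIndependent, hcomb]
  exact (EquivLike.injective_comp b.repr.symm f).symm

theorem natCard_setOf_linearIndependent_span_eq (W : Submodule F V) :
    Nat.card {s : {s : Fin (finrank F W) → V // LinearIndependent F s} //
        Submodule.span F (Set.range s.1) = W}
      = ∏ i : Fin (finrank F W), (Fintype.card F ^ finrank F W - Fintype.card F ^ (i : ℕ)) := by
  rw [← card_linearIndependent le_rfl]
  have hmem (s : {s : {s : Fin (finrank F W) → V // LinearIndependent F s} //
      Submodule.span F (Set.range s.1) = W}) (i) : s.1.1 i ∈ W :=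
    s.2.le (Submodule.subset_span ⟨i, rfl⟩)
  refine Nat.card_congr
    { toFun := fun s => ⟨fun i => ⟨s.1.1 i, hmem s i⟩, .of_comp W.subtype s.1.2⟩
      invFun := fun s => ⟨⟨W.subtype ∘ s.1, s.2.map' _ W.ker_subtype⟩, ?_⟩
      left_inv := fun s => rfl
      right_inv := fun s => rfl }
  refine Submodule.eq_of_le_of_finrank_eq (Submodule.span_le.2 ?_) ?_
  · rintro _ ⟨i, rfl⟩
    exact (s.1 i).2
  · simpa using finrank_span_eq_card (s.2.map' _ W.ker_subtype)

theorem ncard_finrank_eq_mul_prod {k : ℕ} (hk : k ≤ finrank F V) :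
    {W : Submodule F V | finrank F W = k}.ncard *
        ∏ i : Fin k, (Fintype.card F ^ k - Fintype.card F ^ (i : ℕ))
      = ∏ i : Fin k, (Fintype.card F ^ finrank F V - Fintype.card F ^ (i : ℕ)) := by
  let spanOf (s : {s : Fin k → V // LinearIndependent F s}) :
      {W : Submodule F V | finrank F W = k} :=
    ⟨Submodule.span F (Set.range s.1), by simpa using finrank_span_eq_card s.2⟩
  have hfibre (W : {W : Submodule F V | finrank F W = k}) : Nat.card {s // spanOf s = W}
      = ∏ i : Fin k, (Fintype.card F ^ k - Fintype.card F ^ (i : ℕ)) := by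
    obtain ⟨W, rfl⟩ := W
    rw [← natCard_setOf_linearIndependent_span_eq W]
    exact Nat.card_congr (Equiv.subtypeEquivRight fun s => Subtype.ext_iff)
  have := Fintype.ofFinite {W : Submodule F V | finrank F W = k}
  rw [← card_linearIndependent hk, ← Nat.card_congr (Equiv.sigmaFiberEquiv spanOf), Nat.card_sigma,
    Finset.sum_congr rfl fun W _ => hfibre W]
  rw [Finset.sum_const, Finset.card_univ, smul_eq_mul, Set.ncard_eq_toFinset_card',
    Set.toFinset_card]

theorem cast_prod_pow_sub_pow {R : Type*} [CommRing R] {q n k : ℕ} (hq : 0 < q) (hk : k ≤ n) :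
    ((∏ i : Fin k, (q ^ n - q ^ (i : ℕ)) : ℕ) : R)
      = ∏ i ∈ Finset.range k, ((q : R) ^ n - q ^ i) := by
  rw [Finset.prod_range, Nat.cast_prod]
  refine Finset.prod_congr rfl fun i _ => ?_
  rw [Nat.cast_sub (Nat.pow_le_pow_right hq (by omega)), Nat.cast_pow, Nat.cast_pow]

theorem ncard_finrank_eq (k : ℕ) : ({W : Submodule F V | finrank F W = k}.ncard : ℚ)
    = gaussBinom (Fintype.card F) (finrank F V) k := by
  have hq : 1 < Fintype.card F := Fintype.one_lt_card
  rcases lt_or_ge (finrank F V) k with hk | hk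
  · rw [gaussBinom_eq_zero_of_lt hk, Nat.cast_eq_zero, Set.ncard_eq_zero,
      Set.eq_empty_iff_forall_notMem]
    rintro W rfl
    exact hk.not_ge W.finrank_le
  · refine mul_right_cancel₀ (b := ∏ i ∈ Finset.range k,
      ((Fintype.card F : ℚ) ^ k - (Fintype.card F : ℚ) ^ i)) ?_ ?_
    · refine Finset.prod_ne_zero_iff.2 fun i hi => (sub_pos.2 ?_).ne'
      exact pow_lt_pow_right₀ (by exact_mod_cast hq) (Finset.mem_range.1 hi)
    · rw [gaussBinom_mul_prod_pow_sub_pow hq hk, ← cast_prod_pow_sub_pow Fintype.card_pos le_rfl,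
        ← cast_prod_pow_sub_pow Fintype.card_pos hk, ← ncard_finrank_eq_mul_prod hk, Nat.cast_mul]

theorem ncard_finrank_eq_of_le (X : Submodule F V) (k : ℕ) :
    ({W : Submodule F V | finrank F W = k ∧ W ≤ X}.ncard : ℚ)
      = gaussBinom (Fintype.card F) (finrank F X) k := by
  rw [← ncard_finrank_eq k, ← Set.ncard_image_of_injective _
    (Submodule.map_injective_of_injective X.injective_subtype)]
  congr 2
  ext W
  constructor
  · rintro ⟨hW, hWX⟩
    refine ⟨W.comap X.subtype, ?_, ?_⟩
    · rw [Set.mem_ofPred_eq, (Submodule.comapSubtypeEquivOfLe hWX).finrank_eq, hW]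
    · rw [Submodule.map_comap_subtype, inf_eq_right.2 hWX]
  · rintro ⟨W, hW, rfl⟩
    exact ⟨by rw [Submodule.finrank_map_subtype_eq, hW], X.map_subtype_le W⟩

theorem ncard_finrank_eq_of_ge {W : Submodule F V} {k : ℕ} (hk : finrank F W ≤ k) :
    ({R : Submodule F V | finrank F R = k ∧ W ≤ R}.ncard : ℚ)
      = gaussBinom (Fintype.card F) (finrank F V - finrank F W) (k - finrank F W) := by
  have : Finite (V ⧸ W) := Quotient.finite _
  rw [← W.finrank_quotient, ← ncard_finrank_eq, Nat.cast_inj,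
    ← Set.ncard_image_of_injective {S : Submodule F (V ⧸ W) | _}
    (Submodule.comap_injective_of_surjective W.mkQ_surjective)]
  congr 1
  ext R
  constructor
  · rintro ⟨hR, hWR⟩
    refine ⟨R.map W.mkQ, ?_, by rw [W.comap_map_mkQ, sup_eq_right.2 hWR]⟩
    have := finrank_map_mkQ_add hWR
    rw [Set.mem_ofPred_eq]
    omega
  · rintro ⟨R, hR, rfl⟩
    have h := finrank_map_mkQ_add (W.le_comap_mkQ R)
    rw [Submodule.map_comap_eq_of_surjective W.mkQ_surjective] at h
    rw [Set.mem_ofPred_eq] at hR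
    exact ⟨by omega, W.le_comap_mkQ R⟩

end Counting

section Complements

variable {F V W : Type*} [Field F] [AddCommGroup V] [Module F V] [AddCommGroup W] [Module F W]

theorem exists_extend_of_disjoint {A D : Submodule F V} (h : Disjoint A D) (a : A →ₗ[F] W)
    (b : D →ₗ[F] W) : ∃ f : V →ₗ[F] W, f ∘ₗ A.subtype = a ∧ f ∘ₗ D.subtype = b := by
  obtain ⟨A', hA, hc⟩ := h.exists_isCompl
  obtain ⟨g, hg⟩ := LinearMap.exists_extend a
  refine ⟨LinearMap.ofIsCompl hc (g ∘ₗ A'.subtype) b, ?_, by ext x; simp⟩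
  ext x
  rw [← hg]
  exact LinearMap.ofIsCompl_apply_left hc (φ := g ∘ₗ A'.subtype) (ψ := b) ⟨x, hA x.2⟩

theorem ncard_isCompl_and (A : Submodule F V) (p : Submodule F V → Prop) :
    {B | IsCompl A B ∧ p B}.ncard
      = {f : V →ₗ[F] A | f ∘ₗ A.subtype = LinearMap.id ∧ p (LinearMap.ker f)}.ncard := by
  rw [← Nat.card_coe_set_eq, ← Nat.card_coe_set_eq]
  have hproj (f : V →ₗ[F] A) : f ∘ₗ A.subtype = LinearMap.id ↔ ∀ x : A, f x = x := by
    simp [LinearMap.ext_iff]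
  refine Nat.card_congr (.trans (.trans (Equiv.subtypeSubtypeEquivSubtypeInter _ p).symm
    (Equiv.subtypeEquiv (q := fun f => p (LinearMap.ker f.1)) A.isComplEquivProj fun B => ?_))
    (.trans (Equiv.subtypeSubtypeEquivSubtypeInter _ (fun f : V →ₗ[F] A => p (LinearMap.ker f)))
      (Equiv.subtypeEquivRight fun f => and_congr_left' (hproj f).symm)))
  rw [← A.coe_isComplEquivProj_symm_apply, Equiv.symm_apply_apply]

theorem disjoint_ker_iff_injective_mkQ_comp {A A' D : Submodule F V} (hAD : Disjoint A D)
    (hD : D ⊔ A ⊓ A' = A') {f : V →ₗ[F] A} (hf : f ∘ₗ A.subtype = LinearMap.id) :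
    Disjoint A' (LinearMap.ker f)
      ↔ Function.Injective ((A'.comap A.subtype).mkQ ∘ₗ f ∘ₗ D.subtype) := by
  have hfA (x : A) : f x = x := LinearMap.congr_fun hf x
  rw [← LinearMap.ker_eq_bot, LinearMap.ker_eq_bot', Submodule.disjoint_def]
  simp only [LinearMap.comp_apply, Submodule.subtype_apply, Submodule.mkQ_apply,
    Submodule.Quotient.mk_eq_zero, Submodule.mem_comap, LinearMap.mem_ker]
  have hDA' : D ≤ A' := hD ▸ le_sup_left
  constructor
  · intro h d hd
    have hdf : (d : V) - f d = 0 :=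
      h _ (A'.sub_mem (hDA' d.2) hd) (by rw [map_sub, hfA, sub_self])
    exact Subtype.ext (Submodule.disjoint_def.1 hAD d (sub_eq_zero.1 hdf ▸ (f d).2) d.2)
  · intro h x hx hx0
    rw [← hD] at hx
    obtain ⟨d, hd, i, hi, rfl⟩ := Submodule.mem_sup.1 hx
    rw [map_add, hfA ⟨i, hi.1⟩] at hx0
    have hd0 : (⟨d, hd⟩ : D) = 0 := h ⟨d, hd⟩ <| by
      rw [eq_neg_of_add_eq_zero_left hx0]
      exact A'.neg_mem hi.2
    obtain rfl : d = 0 := congrArg Subtype.val hd0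
    rw [map_zero, zero_add] at hx0
    rw [zero_add]
    exact congrArg Subtype.val hx0

theorem exists_disjoint_sup_inf_eq (A A' : Submodule F V) :
    ∃ D, Disjoint A D ∧ D ⊔ A ⊓ A' = A' := by
  obtain ⟨D, hdisj, hsup⟩ :=
    IsModularLattice.exists_disjoint_and_sup_eq (inf_le_right : A ⊓ A' ≤ A')
  have hD : D ≤ A' := hsup ▸ le_sup_right
  refine ⟨D, ?_, by rw [sup_comm, hsup]⟩
  rwa [disjoint_iff, inf_assoc, inf_eq_right.2 hD, ← disjoint_iff] at hdisj

variable [Fintype F] [Finite V] [Finite W]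

theorem ncard_extensions_mul {A D : Submodule F V} (h : Disjoint A D) (a : A →ₗ[F] W)
    (T : Set (D →ₗ[F] W)) :
    {f : V →ₗ[F] W | f ∘ₗ A.subtype = a ∧ f ∘ₗ D.subtype ∈ T}.ncard
        * Fintype.card F ^ ((finrank F A + finrank F D) * finrank F W)
      = T.ncard * Fintype.card F ^ (finrank F V * finrank F W) := by
  let restrict := (LinearMap.lcomp F W A.subtype).prod (LinearMap.lcomp F W D.subtype)
  have hsurj : Function.Surjective restrict := fun ⟨a, b⟩ =>
    let ⟨f, ha, hb⟩ := exists_extend_of_disjoint h a b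
    ⟨f, Prod.ext ha hb⟩
  have key := ncard_preimage_mul_natCard restrict.toAddMonoidHom hsurj ({a} ×ˢ T)
  rw [Set.ncard_prod, Set.ncard_singleton, one_mul, Nat.card_prod, natCard_linearMap,
    natCard_linearMap, natCard_linearMap, ← pow_add, ← add_mul] at key
  exact key

theorem ncard_isCompl_ge_mul {A D : Submodule F V} (h : Disjoint A D) :
    {B | IsCompl A B ∧ D ≤ B}.ncard
        * Fintype.card F ^ ((finrank F A + finrank F D) * finrank F A)
      = Fintype.card F ^ (finrank F V * finrank F A) := by
  have key := ncard_extensions_mul h LinearMap.id {0}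
  rw [Set.ncard_singleton, one_mul] at key
  rw [ncard_isCompl_and A (D ≤ ·), ← key]
  simp only [LinearMap.le_ker_iff_comp_subtype_eq_zero, Set.mem_singleton_iff]

theorem ncard_injective_mkQ_comp_mul (I : Submodule F W)
    (hI : finrank F I + finrank F V = finrank F W) :
    {g : V →ₗ[F] W | Function.Injective (I.mkQ ∘ₗ g)}.ncard
        * Fintype.card F ^ (finrank F V * finrank F V)
      = (∏ i : Fin (finrank F V), (Fintype.card F ^ finrank F V - Fintype.card F ^ (i : ℕ)))
        * Fintype.card F ^ (finrank F V * finrank F W) := by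
  have : Finite (W ⧸ I) := Quotient.finite _
  have hQ : finrank F (W ⧸ I) = finrank F V := by
    rw [I.finrank_quotient, ← hI, Nat.add_sub_cancel_left]
  let post : (V →ₗ[F] W) →ₗ[F] V →ₗ[F] W ⧸ I := LinearMap.compRight F I.mkQ
  have hsurj : Function.Surjective post := fun b => by
    obtain ⟨s, hs⟩ := I.mkQ.exists_rightInverse_of_surjective I.range_mkQ
    refine ⟨s ∘ₗ b, ?_⟩
    change I.mkQ ∘ₗ s ∘ₗ b = b
    rw [← LinearMap.comp_assoc, hs, LinearMap.id_comp]
  have key := ncard_preimage_mul_natCard post.toAddMonoidHom hsurj {b | Function.Injective b}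
  rw [natCard_linearMap, natCard_linearMap, ncard_setOf_injective hQ.ge, hQ] at key
  exact key

theorem ncard_isCompl_isCompl_mul {A A' : Submodule F V} {r : ℕ}
    (hA : finrank F A' = finrank F A) (hr : finrank F (A ⊓ A' : Submodule F V) + r = finrank F A) :
    {B | IsCompl A B ∧ IsCompl A' B}.ncard
        * Fintype.card F ^ (finrank F A * finrank F A + r * r)
      = (∏ i : Fin r, (Fintype.card F ^ r - Fintype.card F ^ (i : ℕ)))
        * Fintype.card F ^ (finrank F V * finrank F A) := by
  obtain ⟨D, hDdisj, hD⟩ := exists_disjoint_sup_inf_eq A A'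
  obtain rfl : finrank F D = r := by
    have := Submodule.finrank_sup_add_finrank_inf_eq D (A ⊓ A')
    rw [hD, (hDdisj.symm.mono_right inf_le_left).eq_bot, finrank_bot] at this
    omega
  have hI : finrank F (A'.comap A.subtype) = finrank F (A ⊓ A' : Submodule F V) := by
    rw [← Submodule.map_comap_subtype A A', Submodule.finrank_map_subtype_eq]
  have hcompl (f : V →ₗ[F] A) (hf : f ∘ₗ A.subtype = LinearMap.id) :
      IsCompl A' (LinearMap.ker f)
        ↔ Function.Injective ((A'.comap A.subtype).mkQ ∘ₗ f ∘ₗ D.subtype) := by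
    have hrange : LinearMap.range f = ⊤ :=
      LinearMap.range_eq_top.2 fun x => ⟨x, LinearMap.congr_fun hf x⟩
    rw [← disjoint_ker_iff_injective_mkQ_comp hDdisj hD hf, Submodule.isCompl_iff_disjoint]
    rw [hA, ← f.finrank_range_add_finrank_ker, hrange, finrank_top]
  have key := ncard_extensions_mul hDdisj LinearMap.id
    {g : D →ₗ[F] A | Function.Injective ((A'.comap A.subtype).mkQ ∘ₗ g)}
  have hinj := ncard_injective_mkQ_comp_mul (V := D) (A'.comap A.subtype) (by omega)
  rw [ncard_isCompl_and A (IsCompl A'), Set.ext fun f => and_congr_right (hcompl f)]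
  have hq : 0 < Fintype.card F ^ (finrank F D * finrank F A) := pow_pos Fintype.card_pos _
  refine Nat.eq_of_mul_eq_mul_right hq ?_
  rw [add_mul, pow_add] at key
  simp only [Set.mem_ofPred_eq] at key
  rw [pow_add]
  linear_combination Fintype.card F ^ (finrank F D * finrank F D) * key
    + Fintype.card F ^ (finrank F V * finrank F A) * hinj

end Complements

open Matrix

section Spectral

variable {X Y : Type*} [Fintype X]

theorem exists_add_dotProduct_eq_zero (U : Submodule ℝ (X → ℝ)) (x : X → ℝ) :
    ∃ u ∈ U, ∃ w, (∀ v ∈ U, v ⬝ᵥ w = 0) ∧ u + w = x := by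
  let e := WithLp.linearEquiv 2 ℝ (X → ℝ)
  obtain ⟨u, hu, w, hw, h⟩ :=
    (U.comap e.toLinearMap).exists_add_mem_mem_orthogonal (WithLp.toLp 2 x)
  refine ⟨e u, hu, e w, fun v hv => ?_, (map_add e u w).symm.trans (congrArg e h.symm)⟩
  have hvw := hw (WithLp.toLp 2 v) hv
  rwa [EuclideanSpace.inner_eq_star_dotProduct, star_trivial, dotProduct_comm] at hvw

theorem dotProduct_mulVec_comm {K : Matrix X X ℝ} (hK : K.IsSymm) (x y : X → ℝ) :
    x ⬝ᵥ K *ᵥ y = K *ᵥ x ⬝ᵥ y := by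
  rw [dotProduct_mulVec, ← mulVec_transpose, hK]

theorem dotProduct_self_mulVec_le_of_eigenvectors {K : Matrix X X ℝ} (hK : K.IsSymm) {c : ℝ}
    {W : Submodule ℝ (X → ℝ)} (hW : ∀ u, K *ᵥ u = c • u → u ∈ W)
    (h : ∀ w ∈ W, (∀ u, K *ᵥ u = c • u → u ⬝ᵥ w = 0) → K *ᵥ w ⬝ᵥ K *ᵥ w ≤ c ^ 2 * (w ⬝ᵥ w))
    {x : X → ℝ} (hx : x ∈ W) : K *ᵥ x ⬝ᵥ K *ᵥ x ≤ c ^ 2 * (x ⬝ᵥ x) := by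
  have hmem (u : X → ℝ) : u ∈ End.eigenspace K.mulVecLin c ↔ K *ᵥ u = c • u :=
    End.mem_eigenspace_iff
  obtain ⟨u, hu, w, hw, rfl⟩ := exists_add_dotProduct_eq_zero (End.eigenspace K.mulVecLin c) x
  simp only [hmem] at hu hw
  have huw : u ⬝ᵥ w = 0 := hw u hu
  have huKw : u ⬝ᵥ K *ᵥ w = 0 := by
    rw [dotProduct_mulVec_comm hK, hu, smul_dotProduct, huw, smul_zero]
  have hwW : w ∈ W := (W.add_mem_iff_right (hW u hu)).1 hx
  rw [mulVec_add, hu]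
  simp only [add_dotProduct, dotProduct_add, smul_dotProduct, dotProduct_smul, smul_eq_mul,
    dotProduct_comm _ u, huw, huKw]
  linarith [h w hwW hw]

theorem dotProduct_mulVec_le_of_row_sum_le {G : Matrix X X ℝ} (hG : G.IsSymm)
    (hnonneg : ∀ i j, 0 ≤ G i j) {ρ : ℝ} (hρ : ∀ i, ∑ j, G i j ≤ ρ) (x : X → ℝ) :
    x ⬝ᵥ G *ᵥ x ≤ ρ * (x ⬝ᵥ x) := by
  have hrow : ∑ i, ∑ j, G i j * x i ^ 2 ≤ ρ * (x ⬝ᵥ x) := by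
    rw [dotProduct, Finset.mul_sum]
    refine Finset.sum_le_sum fun i _ => ?_
    rw [← Finset.sum_mul, sq]
    exact mul_le_mul_of_nonneg_right (hρ i) (mul_self_nonneg _)
  have hcol : ∑ i, ∑ j, G i j * x j ^ 2 = ∑ i, ∑ j, G i j * x i ^ 2 := by
    rw [Finset.sum_comm]
    exact Finset.sum_congr rfl fun i _ => Finset.sum_congr rfl fun j _ => by rw [hG.apply]
  calc x ⬝ᵥ G *ᵥ x = ∑ i, ∑ j, G i j * (x i * x j) := by
        simp only [dotProduct, mulVec, Finset.mul_sum]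
        exact Finset.sum_congr rfl fun i _ => Finset.sum_congr rfl fun j _ => by ring
    _ ≤ ∑ i, ∑ j, (G i j * x i ^ 2 + G i j * x j ^ 2) / 2 :=
        Finset.sum_le_sum fun i _ => Finset.sum_le_sum fun j _ => by
          nlinarith [mul_nonneg (hnonneg i j) (sq_nonneg (x i - x j))]
    _ = ∑ i, ∑ j, G i j * x i ^ 2 := by
        simp only [← Finset.sum_div, Finset.sum_add_distrib, hcol, add_self_div_two]
    _ ≤ ρ * (x ⬝ᵥ x) := hrow

theorem dotProduct_self_mulVec_le_of_entrywise [Fintype Y] {K : Matrix X X ℝ} (hK : K.IsSymm)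
    (M : Matrix Y X ℝ) (a b : ℝ) {ρ : ℝ}
    (hle : ∀ i j, a + b * (Mᵀ * M) i j ≤ (K * K) i j)
    (hρ : ∀ i, ∑ j, ((K * K) i j - (a + b * (Mᵀ * M) i j)) ≤ ρ)
    {w : X → ℝ} (hw : ∑ i, w i = 0) (hMw : M *ᵥ w = 0) :
    K *ᵥ w ⬝ᵥ K *ᵥ w ≤ ρ * (w ⬝ᵥ w) := by
  let G := K * K - (a • Matrix.of (fun _ _ => 1) + b • (Mᵀ * M))
  have hG : G.IsSymm := by
    refine .sub ?_ (.add (.smul (.ext fun _ _ => rfl) _) (.smul ?_ _))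
    · rw [IsSymm, transpose_mul, hK]
    · rw [IsSymm, transpose_mul, transpose_transpose]
  have hJw : Matrix.of (fun _ _ : X => (1 : ℝ)) *ᵥ w = 0 := by
    ext i
    simpa [mulVec, dotProduct] using hw
  have hGw : G *ᵥ w = (K * K) *ᵥ w := by
    have hMMw : (Mᵀ * M) *ᵥ w = 0 := by rw [← mulVec_mulVec, hMw, mulVec_zero]
    simp only [G, sub_mulVec, add_mulVec, smul_mulVec, hMMw, hJw, smul_zero, add_zero, sub_zero]
  have hentry (i j) : G i j = (K * K) i j - (a + b * (Mᵀ * M) i j) := by simp [G]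
  calc K *ᵥ w ⬝ᵥ K *ᵥ w = w ⬝ᵥ G *ᵥ w := by
        rw [hGw, ← mulVec_mulVec, dotProduct_mulVec w, ← mulVec_transpose, hK]
    _ ≤ ρ * (w ⬝ᵥ w) := dotProduct_mulVec_le_of_row_sum_le hG
        (fun i j => by rw [hentry]; exact sub_nonneg.2 (hle i j))
        (fun i => by simpa only [hentry] using hρ i) w

theorem sum_eq_zero_of_mulVec_eq_smul {K : Matrix X X ℝ} (hK : K.IsSymm) {c d : ℝ} (hcd : c ≠ d)
    (hone : K *ᵥ 1 = d • 1) {u : X → ℝ} (hu : K *ᵥ u = c • u) : ∑ i, u i = 0 := by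
  have h : c * (1 ⬝ᵥ u) = d * (1 ⬝ᵥ u) := by
    simpa only [hu, hone, dotProduct_smul, smul_dotProduct, smul_eq_mul]
      using dotProduct_mulVec_comm hK 1 u
  rw [← one_dotProduct]
  exact (mul_eq_mul_right_iff.1 h).resolve_left hcd

/-- If `K (M p) = lam (1 - M p)`, then `M p` differs from an eigenvector for `-lam` by a multiple
of the all-ones vector. -/
theorem dotProduct_self_mulVec_le_of_pencils {K : Matrix X X ℝ} (hK : K.IsSymm)
    (M : Matrix Y X ℝ) {lam Q : ℝ} (hlam : 0 < lam) (hQ : 0 ≤ Q)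
    (hone : K *ᵥ 1 = (lam * Q) • 1) (hM : ∀ p, K *ᵥ M p = lam • (1 - M p))
    (h : ∀ w, ∑ i, w i = 0 → M *ᵥ w = 0 → K *ᵥ w ⬝ᵥ K *ᵥ w ≤ lam ^ 2 * (w ⬝ᵥ w))
    {x : X → ℝ} (hx : ∑ i, x i = 0) : K *ᵥ x ⬝ᵥ K *ᵥ x ≤ lam ^ 2 * (x ⬝ᵥ x) := by
  have hQ1 : Q + 1 ≠ 0 := by positivity
  let W : Submodule ℝ (X → ℝ) := LinearMap.ker (∑ i, LinearMap.proj i : (X → ℝ) →ₗ[ℝ] ℝ)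
  have hmem (y : X → ℝ) : y ∈ W ↔ ∑ i, y i = 0 := by
    simp [W, LinearMap.sum_apply]
  rw [← hmem] at hx
  rw [← neg_sq lam]
  refine dotProduct_self_mulVec_le_of_eigenvectors hK (W := W) (fun u hu => (hmem u).2 <|
    sum_eq_zero_of_mulVec_eq_smul hK (by nlinarith) hone hu) (fun w hw hortho => ?_) hx
  rw [neg_sq]
  rw [hmem] at hw
  refine h w hw (funext fun p => ?_)
  have heig : K *ᵥ (M p - (Q + 1)⁻¹ • 1) = -lam • (M p - (Q + 1)⁻¹ • 1) := by
    rw [mulVec_sub, mulVec_smul, hM, hone]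
    ext i
    simp only [Pi.sub_apply, Pi.smul_apply, Pi.one_apply, smul_eq_mul]
    field_simp
    ring
  have hp := hortho _ heig
  rwa [sub_dotProduct, smul_dotProduct, one_dotProduct, hw, smul_zero, sub_zero] at hp

theorem expander_mixing {K : Matrix X X ℝ} (hK : K.IsSymm) {d lam : ℝ} (hone : K *ᵥ 1 = d • 1)
    (h : ∀ x : X → ℝ, ∑ i, x i = 0 → K *ᵥ x ⬝ᵥ K *ᵥ x ≤ lam ^ 2 * (x ⬝ᵥ x)) (x y : X → ℝ) :
    ((Fintype.card X : ℝ) * (x ⬝ᵥ K *ᵥ y) - d * (∑ i, x i) * ∑ i, y i) ^ 2 ≤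
      lam ^ 2 * (Fintype.card X * (x ⬝ᵥ x) - (∑ i, x i) ^ 2) *
        (Fintype.card X * (y ⬝ᵥ y) - (∑ i, y i) ^ 2) := by
  obtain hX | hX := isEmpty_or_nonempty X
  · simp
  set N : ℝ := (Fintype.card X : ℝ) with hN
  have hNpos : 0 < N := by rw [hN]; exact_mod_cast Fintype.card_pos
  let f (z : X → ℝ) : X → ℝ := N • z - (∑ i, z i) • 1
  have hsum (z) : ∑ i, f z i = 0 := by simp [f, ← Finset.mul_sum, ← hN]
  have hff (z) : f z ⬝ᵥ f z = N * (N * (z ⬝ᵥ z) - (∑ i, z i) ^ 2) := by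
    calc f z ⬝ᵥ f z = f z ⬝ᵥ N • z - f z ⬝ᵥ (∑ i, z i) • 1 := dotProduct_sub _ _ _
      _ = N * (f z ⬝ᵥ z) := by
        rw [dotProduct_smul, dotProduct_smul, dotProduct_one, hsum, smul_zero, sub_zero,
          smul_eq_mul]
      _ = N * (N * (z ⬝ᵥ z) - (∑ i, z i) ^ 2) := by
        rw [sub_dotProduct, smul_dotProduct, smul_dotProduct, one_dotProduct, sq, smul_eq_mul,
          smul_eq_mul]
  have hfKf : f x ⬝ᵥ K *ᵥ f y = N * (N * (x ⬝ᵥ K *ᵥ y) - d * (∑ i, x i) * ∑ i, y i) := by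
    calc f x ⬝ᵥ K *ᵥ f y = f x ⬝ᵥ N • K *ᵥ y - f x ⬝ᵥ (∑ i, y i) • d • 1 := by
          rw [← dotProduct_sub, ← hone, ← mulVec_smul, ← mulVec_smul, ← mulVec_sub]
      _ = N * (f x ⬝ᵥ K *ᵥ y) := by
        rw [dotProduct_smul, dotProduct_smul, dotProduct_smul, dotProduct_one, hsum, smul_zero,
          smul_zero, sub_zero, smul_eq_mul]
      _ = N * (N * (x ⬝ᵥ K *ᵥ y) - d * (∑ i, x i) * ∑ i, y i) := by
        rw [sub_dotProduct, smul_dotProduct, smul_dotProduct, dotProduct_mulVec_comm hK 1, hone,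
          smul_dotProduct, one_dotProduct, smul_eq_mul, smul_eq_mul, smul_eq_mul]
        ring
  have hCS : (f x ⬝ᵥ K *ᵥ f y) ^ 2 ≤ (f x ⬝ᵥ f x) * (lam ^ 2 * (f y ⬝ᵥ f y)) := by
    have hcs := Finset.sum_mul_sq_le_sq_mul_sq Finset.univ (f x) (K *ᵥ f y)
    simp only [sq (f x _), sq ((K *ᵥ f y) _)] at hcs
    exact hcs.trans (mul_le_mul_of_nonneg_left (h _ (hsum y))
      (Finset.sum_nonneg fun i _ => mul_self_nonneg _))
  rw [hff, hff, hfKf] at hCS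
  refine le_of_mul_le_mul_left ?_ (pow_pos hNpos 2)
  linarith

theorem sq_mul_card_mul_card_le {K : Matrix X X ℝ} (hK : K.IsSymm) {lam Q : ℝ} (hlam : 0 < lam)
    (hone : K *ᵥ 1 = (lam * Q) • 1)
    (h : ∀ x : X → ℝ, ∑ i, x i = 0 → K *ᵥ x ⬝ᵥ K *ᵥ x ≤ lam ^ 2 * (x ⬝ᵥ x))
    {S T : Finset X} (hST : ∀ i ∈ S, ∀ j ∈ T, K i j = 0) :
    Q ^ 2 * (S.card * T.card) ≤ (Fintype.card X - S.card) * (Fintype.card X - T.card) := by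
  classical
  let ind (S : Finset X) : X → ℝ := fun i => if i ∈ S then 1 else 0
  have hsum (S) : ∑ i, ind S i = S.card := by simp [ind]
  have hself (S) : ind S ⬝ᵥ ind S = S.card := by simp [ind, dotProduct]
  have hzero : ind S ⬝ᵥ K *ᵥ ind T = 0 :=
    Finset.sum_eq_zero fun i _ => by
      by_cases hi : i ∈ S
      · refine mul_eq_zero_of_right _ (Finset.sum_eq_zero fun j _ => ?_)
        by_cases hj : j ∈ T
        · exact mul_eq_zero_of_left (hST i hi j hj) _
        · simp only [ind, if_neg hj, mul_zero]
      · simp only [ind, if_neg hi, zero_mul]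
  have hmix := expander_mixing hK hone h (ind S) (ind T)
  rw [hsum, hsum, hself, hself, hzero] at hmix
  have hle (S : Finset X) : (S.card : ℝ) ≤ Fintype.card X := mod_cast S.card_le_univ
  have hnonneg : (0 : ℝ) ≤ S.card * T.card := by positivity
  obtain h0 | hpos := hnonneg.eq_or_lt
  · rw [← h0, mul_zero]
    exact mul_nonneg (sub_nonneg.2 (hle S)) (sub_nonneg.2 (hle T))
  · refine le_of_mul_le_mul_left ?_ (mul_pos (pow_pos hlam 2) hpos)
    linarith

theorem card_mul_card_le {K : Matrix X X ℝ} (hK : K.IsSymm) {lam Q : ℝ} (hlam : 0 < lam)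
    (hQ : 0 ≤ Q) (hone : K *ᵥ 1 = (lam * Q) • 1)
    (h : ∀ x : X → ℝ, ∑ i, x i = 0 → K *ᵥ x ⬝ᵥ K *ᵥ x ≤ lam ^ 2 * (x ⬝ᵥ x))
    {S T : Finset X} (hST : ∀ i ∈ S, ∀ j ∈ T, K i j = 0) :
    (Q + 1) ^ 2 * (S.card * T.card) ≤ (Fintype.card X : ℝ) ^ 2 := by
  have hmix := sq_mul_card_mul_card_le hK hlam hone h hST
  have hle (S : Finset X) : (S.card : ℝ) ≤ Fintype.card X := mod_cast S.card_le_univ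
  set N : ℝ := (Fintype.card X : ℝ)
  set s : ℝ := √S.card
  set t : ℝ := √T.card
  have hs : s ^ 2 = S.card := Real.sq_sqrt (Nat.cast_nonneg _)
  have ht : t ^ 2 = T.card := Real.sq_sqrt (Nat.cast_nonneg _)
  have hst : s * t ≤ N := by nlinarith [hle S, hle T, sq_nonneg (s - t)]
  have hQst : Q * (s * t) ≤ N - s * t := by
    refine le_of_sq_le_sq ?_ (sub_nonneg.2 hst)
    rw [← hs, ← ht] at hmix
    have hN : 0 ≤ N := Nat.cast_nonneg _
    nlinarith [mul_nonneg hN (sq_nonneg (s - t))]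
  calc (Q + 1) ^ 2 * (S.card * T.card) = ((Q + 1) * (s * t)) ^ 2 := by rw [← hs, ← ht]; ring
    _ ≤ N ^ 2 := pow_le_pow_left₀ (by positivity) (by linarith) 2

end Spectral

section ComplementCount

theorem one_sub_sum_le_prod_one_sub {ι : Type*} (s : Finset ι) (f : ι → ℝ)
    (h0 : ∀ i ∈ s, 0 ≤ f i) (h1 : ∀ i ∈ s, f i ≤ 1) :
    1 - ∑ i ∈ s, f i ≤ ∏ i ∈ s, (1 - f i) := by
  induction s using Finset.cons_induction with
  | empty => simp
  | cons i s hi ih =>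
    simp only [Finset.forall_mem_cons] at h0 h1
    have hprod : ∏ j ∈ s, (1 - f j) ≤ 1 :=
      Finset.prod_le_one (fun j hj => sub_nonneg.2 (h1.2 j hj))
        fun j hj => sub_le_self _ (h0.2 j hj)
    rw [Finset.sum_cons, Finset.prod_cons, sub_mul, one_mul]
    linarith [ih h0.2 h1.2, mul_le_of_le_one_right h0.1 hprod]

/-- The number of common complements of two `m`-spaces of `F_q^{2m}` that meet in an
`(m - r)`-space, see `ncard_isCompl_isCompl_eq_complCount`. -/
noncomputable def complCount (q : ℝ) (m r : ℕ) : ℝ :=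
  q ^ (m * m) * ∏ t ∈ Finset.range r, (1 - (q ^ (t + 1))⁻¹)

variable {q : ℝ}

theorem complCount_pos (hq : 1 < q) (m r : ℕ) : 0 < complCount q m r :=
  mul_pos (by positivity) <| Finset.prod_pos fun t _ =>
    sub_pos.2 <| inv_lt_one_of_one_lt₀ (one_lt_pow₀ hq t.succ_ne_zero)

theorem complCount_succ_mul (hq : q ≠ 0) (m r : ℕ) :
    complCount q m (r + 1) * q ^ (r + 1) = complCount q m r * (q ^ (r + 1) - 1) := by
  rw [complCount, complCount, Finset.prod_range_succ]
  field_simp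

theorem complCount_antitone (hq : 1 < q) (m : ℕ) : Antitone (complCount q m) :=
  antitone_nat_of_succ_le fun r => by
    have hpow : 0 < q ^ (r + 1) := by positivity
    refine le_of_mul_le_mul_right ?_ hpow
    rw [complCount_succ_mul (by positivity)]
    exact mul_le_mul_of_nonneg_left (sub_le_self _ zero_le_one) (complCount_pos hq m r).le

theorem complCount_mul_pow (hq : q ≠ 0) (m r : ℕ) :
    complCount q m r * q ^ (r * r) =
      (∏ t ∈ Finset.range r, (q ^ r - q ^ t)) * q ^ (m * m) := by
  have hpow : q ^ (r * r) = ∏ _t ∈ Finset.range r, q ^ r := by simp [pow_mul]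
  rw [complCount, mul_assoc, mul_comm, hpow,
    ← Finset.prod_range_reflect (fun t => 1 - (q ^ (t + 1))⁻¹), ← Finset.prod_mul_distrib]
  congr 1
  refine Finset.prod_congr rfl fun t ht => ?_
  have hsplit : q ^ r = q ^ (r - 1 - t + 1) * q ^ t := by
    have := Finset.mem_range.1 ht
    rw [← pow_add]
    congr 1
    omega
  rw [hsplit, sub_mul, one_mul, inv_mul_cancel_left₀ (pow_ne_zero _ hq)]

theorem complCount_self_add_le (hq : 1 < q) {m i : ℕ} (hi : i ≤ m) :
    complCount q m m + complCount q m m / (q ^ m - 1) * ((q ^ i - 1) / (q - 1)) ≤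
      complCount q m (m - i) := by
  have hq0 : 0 < q := by linarith
  induction i with
  | zero => simp
  | succ i ih =>
    obtain ⟨r, rfl⟩ : ∃ r, m = r + 1 + i := ⟨m - (i + 1), by omega⟩
    have ih := ih (by omega)
    rw [Nat.add_sub_cancel] at ih
    rw [show r + 1 + i - (i + 1) = r by omega]
    set m := r + 1 + i
    have hr : 0 < q ^ (r + 1) - 1 := sub_pos.2 (one_lt_pow₀ hq r.succ_ne_zero)
    have hm : 0 < q ^ m - 1 := sub_pos.2 (one_lt_pow₀ hq (by omega))
    have hstep : complCount q m r =
        complCount q m (r + 1) + complCount q m (r + 1) / (q ^ (r + 1) - 1) := by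
      field_simp
      linarith [complCount_succ_mul hq0.ne' m r]
    have hdiff : complCount q m m / (q ^ m - 1) * q ^ i ≤
        complCount q m (r + 1) / (q ^ (r + 1) - 1) := by
      rw [div_mul_eq_mul_div, div_le_div_iff₀ hm hr, mul_assoc]
      refine mul_le_mul (complCount_antitone hq m (by omega)) ?_ ?_ (complCount_pos hq _ _).le
      · rw [mul_sub, ← pow_add, add_comm i, mul_one]
        exact sub_le_sub_left (one_le_pow₀ hq.le) _
      · positivity
    have hgeom : (q ^ (i + 1) - 1) / (q - 1) = (q ^ i - 1) / (q - 1) + q ^ i := by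
      have : q - 1 ≠ 0 := by linarith
      field_simp
      ring
    rw [hgeom, mul_add]
    linarith

theorem complCount_self_mul (hq : 1 < q) {m : ℕ} {N : ℝ}
    (hN : N * ∏ t ∈ Finset.range m, (q ^ m - q ^ t) = ∏ t ∈ Finset.range m, (q ^ (2 * m) - q ^ t)) :
    complCount q m m * N =
      (q ^ (m * m)) ^ 2 * ∏ t ∈ Finset.range m, (1 - q ^ t / q ^ (2 * m)) := by
  have hq0 : q ≠ 0 := by linarith
  have hself := complCount_mul_pow hq0 m m
  rw [mul_right_cancel₀ (pow_ne_zero _ hq0) hself, mul_comm, hN]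
  have hpow : (q ^ (m * m)) ^ 2 = ∏ _t ∈ Finset.range m, q ^ (2 * m) := by
    rw [Finset.prod_const, Finset.card_range, ← pow_mul, ← pow_mul]
    congr 1
    ring
  rw [hpow, ← Finset.prod_mul_distrib]
  exact Finset.prod_congr rfl fun t _ => by field_simp

theorem one_sub_le_prod_one_sub_pow_div (hq : 1 < q) (m : ℕ) :
    1 - (q ^ m - 1) / ((q - 1) * (q ^ m) ^ 2) ≤
      ∏ t ∈ Finset.range m, (1 - q ^ t / q ^ (2 * m)) := by
  have hsum : ∑ t ∈ Finset.range m, q ^ t / q ^ (2 * m) =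
      (q ^ m - 1) / ((q - 1) * (q ^ m) ^ 2) := by
    rw [← Finset.sum_div, geom_sum_eq hq.ne', div_div, mul_comm 2, pow_mul]
  rw [← hsum]
  refine one_sub_sum_le_prod_one_sub _ _ (fun t _ => by positivity) fun t ht => ?_
  rw [div_le_one (by positivity)]
  exact pow_le_pow_right₀ hq.le (by have := Finset.mem_range.1 ht; omega)

theorem one_sub_mul_one_add_le {Q Z : ℝ} (hq : 2 ≤ q) (hQ : 1 < Q)
    (hZ : 1 - (Q - 1) / ((q - 1) * Q ^ 2) ≤ Z) :
    1 - Z * (1 + 1 / ((q - 1) * (Q + 1))) ≤ (1 / Q) ^ 2 := by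
  have hq1 : 1 ≤ q - 1 := by linarith
  set y := (Q - 1) / ((q - 1) * Q ^ 2) with hy
  have hy0 : 0 ≤ y := div_nonneg (by linarith) (by positivity)
  have hyQ : y ≤ 1 / Q := by
    rw [hy, div_le_div_iff₀ (by positivity) (by linarith)]
    nlinarith
  have hyz : y ≤ 1 / ((q - 1) * (Q + 1)) := by
    rw [hy, div_le_div_iff₀ (by positivity) (by positivity)]
    nlinarith
  have hy1 : y ≤ 1 := hyQ.trans ((div_le_one (by linarith)).2 hQ.le)
  calc 1 - Z * (1 + 1 / ((q - 1) * (Q + 1))) ≤ 1 - (1 - y) * (1 + y) :=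
        sub_le_sub_left (mul_le_mul hZ (by linarith) (by linarith) (by linarith)) _
    _ = y ^ 2 := by ring
    _ ≤ (1 / Q) ^ 2 := pow_le_pow_left₀ hy0 hyQ 2

theorem sq_sub_complCount_mul_le (hq : 2 ≤ q) {m : ℕ} (hm : 0 < m) {N : ℝ}
    (hN : N * ∏ t ∈ Finset.range m, (q ^ m - q ^ t) = ∏ t ∈ Finset.range m, (q ^ (2 * m) - q ^ t)) :
    (q ^ (m * m)) ^ 2 - (complCount q m m * N + complCount q m m / (q ^ m - 1) *
      ((q ^ m - 1) / (q - 1) * (N / (q ^ m + 1)))) ≤ (q ^ (m * m) / q ^ m) ^ 2 := by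
  have hQ : 1 < q ^ m := one_lt_pow₀ (by linarith) hm.ne'
  have hZ := one_sub_mul_one_add_le hq hQ (one_sub_le_prod_one_sub_pow_div (by linarith) m)
  have hCN := complCount_self_mul (by linarith) hN
  set Z := ∏ t ∈ Finset.range m, (1 - q ^ t / q ^ (2 * m))
  set z := 1 / ((q - 1) * (q ^ m + 1)) with hz
  calc _ = (q ^ (m * m)) ^ 2 - complCount q m m * N * (1 + z) := by
        have : q - 1 ≠ 0 := by linarith
        have : q ^ m - 1 ≠ 0 := by linarith
        rw [hz]
        field_simp
    _ = (q ^ (m * m)) ^ 2 * (1 - Z * (1 + z)) := by rw [hCN]; ring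
    _ ≤ (q ^ (m * m)) ^ 2 * (1 / q ^ m) ^ 2 := mul_le_mul_of_nonneg_left hZ (by positivity)
    _ = (q ^ (m * m) / q ^ m) ^ 2 := by rw [← mul_pow, mul_one_div]

end ComplementCount

section CrossIntersecting

/-- The `m`-dimensional subspaces of `V`, used as an index type for matrices. -/
abbrev SubspaceOfDim (F V : Type*) [Field F] [AddCommGroup V] [Module F V] (m : ℕ) : Type _ :=
  {W : Submodule F V // finrank F W = m}

variable {F V : Type*} [Field F] [AddCommGroup V] [Module F V] {m : ℕ}

noncomputable instance [Finite V] : Fintype (SubspaceOfDim F V m) := Fintype.ofFinite _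

open Classical in
/-- The `0`-`1` matrix recording which pairs of `m`-spaces are complementary. -/
noncomputable def complMatrix (F V : Type*) [Field F] [AddCommGroup V] [Module F V] (m : ℕ) :
    Matrix (SubspaceOfDim F V m) (SubspaceOfDim F V m) ℝ :=
  fun A B => if IsCompl A.1 B.1 then 1 else 0

open Classical in
/-- The `0`-`1` matrix recording which `d`-spaces are contained in which `m`-spaces. -/
noncomputable def inclMatrix (F V : Type*) [Field F] [AddCommGroup V] [Module F V] (d m : ℕ) :
    Matrix (SubspaceOfDim F V d) (SubspaceOfDim F V m) ℝ :=
  fun P A => if P.1 ≤ A.1 then 1 else 0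

theorem complMatrix_isSymm : (complMatrix F V m).IsSymm := by
  classical
  exact Matrix.ext fun _ _ => if_congr isCompl_comm rfl rfl

theorem complMatrix_apply_eq_zero {A B : SubspaceOfDim F V m} (h : A.1 ⊓ B.1 ≠ ⊥) :
    complMatrix F V m A B = 0 :=
  if_neg fun hAB => h hAB.inf_eq_bot

theorem setOf_isCompl_and_eq [FiniteDimensional F V] (hV : finrank F V = 2 * m)
    {A : Submodule F V} (hA : finrank F A = m) (p : Submodule F V → Prop) :
    {B | IsCompl A B ∧ p B} = {B : Submodule F V | finrank F B = m ∧ IsCompl A B ∧ p B} := by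
  refine Set.ext fun B => ⟨fun hB => ⟨?_, hB⟩, And.right⟩
  have := Submodule.finrank_add_eq_of_isCompl hB.1
  omega

/-- Every member of `S` meets every member of `T` nontrivially. An intersecting family is one that
is cross-intersecting with itself. -/
def CrossIntersecting (S T : Set (Submodule F V)) : Prop :=
  ∀ A ∈ S, ∀ B ∈ T, A ⊓ B ≠ ⊥

section Finite

variable [Finite V]

theorem sum_ite_eq_ncard (p : Submodule F V → Prop) [DecidablePred p] :
    ∑ W : SubspaceOfDim F V m, (if p W then (1 : ℝ) else 0)
      = {W : Submodule F V | finrank F W = m ∧ p W}.ncard := by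
  rw [Finset.sum_boole, ← Fintype.card_subtype, ← Nat.card_eq_fintype_card, ← Nat.card_coe_set_eq]
  exact congrArg _ (Nat.card_congr (Equiv.subtypeSubtypeEquivSubtypeInter _ p))

variable [Fintype F] (hV : finrank F V = 2 * m)
include hV

theorem ncard_isCompl_ge_eq {A D : Submodule F V} (hA : finrank F A = m) (h : Disjoint A D) :
    ({B | IsCompl A B ∧ D ≤ B}.ncard : ℝ)
      = (Fintype.card F : ℝ) ^ (m * m) / Fintype.card F ^ (finrank F D * m) := by
  have hcount := congrArg (Nat.cast : ℕ → ℝ) (ncard_isCompl_ge_mul h)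
  have hq : (Fintype.card F : ℝ) ≠ 0 := Nat.cast_ne_zero.2 Fintype.card_ne_zero
  rw [hA, hV, add_mul, two_mul, add_mul] at hcount
  push_cast [pow_add] at hcount
  rw [eq_div_iff (by positivity)]
  refine mul_right_cancel₀ (pow_ne_zero (m * m) hq) ?_
  linarith

theorem ncard_isCompl_isCompl_eq_complCount {A A' : Submodule F V} (hA : finrank F A = m)
    (hA' : finrank F A' = m) : ({B | IsCompl A B ∧ IsCompl A' B}.ncard : ℝ)
      = complCount (Fintype.card F) m (m - finrank F (A ⊓ A' : Submodule F V)) := by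
  have hle : finrank F (A ⊓ A' : Submodule F V) ≤ m := hA ▸ Submodule.finrank_mono inf_le_left
  obtain ⟨r, hr⟩ : ∃ r, finrank F (A ⊓ A' : Submodule F V) + r = m := ⟨_, Nat.add_sub_cancel' hle⟩
  have hcount := congrArg (Nat.cast : ℕ → ℝ)
    (ncard_isCompl_isCompl_mul (hA'.trans hA.symm) (hr.trans hA.symm))
  have hq : (Fintype.card F : ℝ) ≠ 0 := Nat.cast_ne_zero.2 Fintype.card_ne_zero
  rw [hA, hV, Nat.cast_mul, Nat.cast_mul, cast_prod_pow_sub_pow Fintype.card_pos le_rfl,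
    two_mul, add_mul] at hcount
  push_cast [pow_add] at hcount
  have hC := complCount_mul_pow hq m r
  rw [show m - finrank F (A ⊓ A' : Submodule F V) = r by omega]
  have hne : (Fintype.card F : ℝ) ^ (m * m) * (Fintype.card F : ℝ) ^ (r * r) ≠ 0 := by positivity
  refine mul_right_cancel₀ hne ?_
  rw [hcount]
  linear_combination -(Fintype.card F : ℝ) ^ (m * m) * hC

theorem complMatrix_mulVec_inclMatrix {d : ℕ} {P : SubspaceOfDim F V d} {A : SubspaceOfDim F V m}
    (h : Disjoint A.1 P.1) : (complMatrix F V m *ᵥ inclMatrix F V d m P) A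
      = (Fintype.card F : ℝ) ^ (m * m) / Fintype.card F ^ (d * m) := by
  classical
  have hcount := ncard_isCompl_ge_eq hV A.2 h
  rw [P.2, setOf_isCompl_and_eq hV A.2 (P.1 ≤ ·), ← sum_ite_eq_ncard] at hcount
  rw [← hcount]
  refine Finset.sum_congr rfl fun B _ => ?_
  simp only [complMatrix, inclMatrix, ite_and, ite_mul, one_mul, zero_mul]

theorem complMatrix_mulVec_one : complMatrix F V m *ᵥ 1 = ((Fintype.card F : ℝ) ^ (m * m)) • 1 := by
  let bot : SubspaceOfDim F V 0 := ⟨⊥, finrank_bot F V⟩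
  have hone : (1 : SubspaceOfDim F V m → ℝ) = inclMatrix F V 0 m bot :=
    funext fun B => (if_pos bot_le).symm
  ext A
  rw [hone, complMatrix_mulVec_inclMatrix hV disjoint_bot_right, ← hone, zero_mul, pow_zero,
    div_one, Pi.smul_apply, Pi.one_apply, smul_eq_mul, mul_one]

theorem complMatrix_mulVec_inclMatrix_one (P : SubspaceOfDim F V 1) :
    complMatrix F V m *ᵥ inclMatrix F V 1 m P
      = ((Fintype.card F : ℝ) ^ (m * m) / Fintype.card F ^ m) • (1 - inclMatrix F V 1 m P) := by
  have hP : IsAtom P.1 := Submodule.isAtom_iff_finrank_eq_one.2 P.2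
  ext A
  rw [Pi.smul_apply, Pi.sub_apply, Pi.one_apply]
  by_cases hPA : P.1 ≤ A.1
  · rw [inclMatrix, if_pos hPA, sub_self, smul_zero]
    refine Finset.sum_eq_zero fun B _ => ?_
    by_cases hPB : P.1 ≤ B.1
    · have hne : A.1 ⊓ B.1 ≠ ⊥ := ne_bot_of_le_ne_bot hP.1 (le_inf hPA hPB)
      exact mul_eq_zero_of_left (complMatrix_apply_eq_zero hne) _
    · exact mul_eq_zero_of_right _ (if_neg hPB)
  · have hdisj : Disjoint A.1 P.1 := (hP.not_le_iff_disjoint.1 hPA).symm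
    rw [complMatrix_mulVec_inclMatrix hV hdisj, one_mul, inclMatrix, if_neg hPA, sub_zero,
      smul_eq_mul, mul_one]

theorem complMatrix_mul_self_apply (A A' : SubspaceOfDim F V m) :
    (complMatrix F V m * complMatrix F V m) A A'
      = complCount (Fintype.card F) m (m - finrank F (A.1 ⊓ A'.1 : Submodule F V)) := by
  classical
  rw [← ncard_isCompl_isCompl_eq_complCount hV A.2 A'.2,
    setOf_isCompl_and_eq hV A.2 (IsCompl A'.1), ← sum_ite_eq_ncard]
  refine Finset.sum_congr rfl fun B _ => ?_
  simp only [complMatrix, isCompl_comm (x := B.1), ite_and, ite_mul, one_mul, zero_mul]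

omit hV in
theorem inclMatrix_one_transpose_mul_self_apply (A A' : SubspaceOfDim F V m) :
    ((inclMatrix F V 1 m)ᵀ * inclMatrix F V 1 m) A A'
      = ((Fintype.card F : ℝ) ^ finrank F (A.1 ⊓ A'.1 : Submodule F V) - 1)
        / (Fintype.card F - 1) := by
  classical
  have hq : 1 < Fintype.card F := Fintype.one_lt_card
  have hcount := congrArg (Rat.cast : ℚ → ℝ) ((congrArg (· * _)
    (ncard_finrank_eq_of_le (A.1 ⊓ A'.1) 1)).trans (gaussBinom_one_mul hq _))
  push_cast [← sum_ite_eq_ncard] at hcount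
  have hq' : (1 : ℝ) < Fintype.card F := mod_cast hq
  rw [eq_div_iff (by linarith), ← hcount]
  congr 1
  refine Finset.sum_congr rfl fun P _ => ?_
  simp only [transpose_apply, inclMatrix, le_inf_iff, ite_and, ite_mul, one_mul, zero_mul]

theorem card_subspaceOfDim (hm : 0 < m) : (Fintype.card (SubspaceOfDim F V m) : ℚ)
    = gaussBinom (Fintype.card F) (2 * m - 1) (m - 1) * ((Fintype.card F : ℚ) ^ m + 1) := by
  rw [← gaussBinom_two_mul Fintype.one_lt_card hm, ← hV, ← ncard_finrank_eq, ← Nat.card_coe_set_eq,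
    ← Nat.card_eq_fintype_card]
  rfl

theorem inclMatrix_one_mulVec_one (hm : 0 < m) : inclMatrix F V 1 m *ᵥ 1
    = ((Fintype.card (SubspaceOfDim F V m) : ℝ) / ((Fintype.card F : ℝ) ^ m + 1)) • 1 := by
  classical
  ext P
  have hcount := congrArg (Rat.cast : ℚ → ℝ) (ncard_finrank_eq_of_ge (P.2.trans_le hm))
  have hcard := congrArg (Rat.cast : ℚ → ℝ) (card_subspaceOfDim hV hm)
  rw [P.2, hV] at hcount
  push_cast [← sum_ite_eq_ncard] at hcount hcard
  have hne : (Fintype.card F : ℝ) ^ m + 1 ≠ 0 := by positivity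
  rw [hcard, mul_div_cancel_right₀ _ hne, ← hcount, Pi.smul_apply, Pi.one_apply, smul_eq_mul,
    mul_one]
  exact dotProduct_one _

theorem sum_inclMatrix_one_transpose_mul_self (hm : 0 < m) (A : SubspaceOfDim F V m) :
    ∑ A', ((inclMatrix F V 1 m)ᵀ * inclMatrix F V 1 m) A A'
      = ((Fintype.card F : ℝ) ^ m - 1) / (Fintype.card F - 1) *
        (Fintype.card (SubspaceOfDim F V m) / ((Fintype.card F : ℝ) ^ m + 1)) := by
  classical
  have hdiag := inclMatrix_one_transpose_mul_self_apply A A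
  rw [inf_idem, A.2] at hdiag
  rw [← dotProduct_one]
  change (_ *ᵥ (1 : SubspaceOfDim F V m → ℝ)) A = _
  rw [← mulVec_mulVec, inclMatrix_one_mulVec_one hV hm, mulVec_smul, ← hdiag, Pi.smul_apply,
    smul_eq_mul, mul_comm]
  congr 1
  refine (dotProduct_one _).trans (Finset.sum_congr rfl fun P _ => ?_)
  simp only [transpose_apply, inclMatrix, mul_ite, mul_one, mul_zero]
  split_ifs <;> rfl

theorem sum_complMatrix_mul_self (A : SubspaceOfDim F V m) :
    ∑ A', (complMatrix F V m * complMatrix F V m) A A' = ((Fintype.card F : ℝ) ^ (m * m)) ^ 2 := by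
  rw [← dotProduct_one]
  change (_ *ᵥ (1 : SubspaceOfDim F V m → ℝ)) A = _
  rw [← mulVec_mulVec, complMatrix_mulVec_one hV, mulVec_smul, complMatrix_mulVec_one hV, smul_smul,
    ← sq, Pi.smul_apply, Pi.one_apply, smul_eq_mul, mul_one]

theorem card_subspaceOfDim_mul_prod : (Fintype.card (SubspaceOfDim F V m) : ℝ) *
      ∏ t ∈ Finset.range m, ((Fintype.card F : ℝ) ^ m - (Fintype.card F : ℝ) ^ t)
    = ∏ t ∈ Finset.range m, ((Fintype.card F : ℝ) ^ (2 * m) - (Fintype.card F : ℝ) ^ t) := by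
  have hle : m ≤ finrank F V := by omega
  rw [← hV, ← cast_prod_pow_sub_pow Fintype.card_pos le_rfl,
    ← cast_prod_pow_sub_pow Fintype.card_pos hle, ← ncard_finrank_eq_mul_prod hle, Nat.cast_mul,
    ← Nat.card_coe_set_eq, ← Nat.card_eq_fintype_card]
  rfl

theorem dotProduct_self_complMatrix_mulVec_le (hm : 0 < m) {x : SubspaceOfDim F V m → ℝ}
    (hx : ∑ A, x A = 0) : complMatrix F V m *ᵥ x ⬝ᵥ complMatrix F V m *ᵥ x
      ≤ ((Fintype.card F : ℝ) ^ (m * m) / (Fintype.card F : ℝ) ^ m) ^ 2 * (x ⬝ᵥ x) := by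
  have hq : (2 : ℝ) ≤ Fintype.card F := mod_cast Fintype.one_lt_card
  refine dotProduct_self_mulVec_le_of_pencils complMatrix_isSymm (inclMatrix F V 1 m)
    (Q := (Fintype.card F : ℝ) ^ m) (by positivity) (by positivity) ?_
    (complMatrix_mulVec_inclMatrix_one hV) (fun w hw hMw => ?_) hx
  · rw [complMatrix_mulVec_one hV, div_mul_cancel₀ _ (by positivity)]
  refine dotProduct_self_mulVec_le_of_entrywise complMatrix_isSymm (inclMatrix F V 1 m)
    (complCount (Fintype.card F) m m)
    (complCount (Fintype.card F) m m / ((Fintype.card F : ℝ) ^ m - 1))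
    (fun A A' => ?_) (fun A => ?_) hw hMw
  · rw [complMatrix_mul_self_apply hV, inclMatrix_one_transpose_mul_self_apply]
    exact complCount_self_add_le (by linarith)
      ((Submodule.finrank_mono inf_le_left).trans_eq A.2)
  · rw [Finset.sum_sub_distrib, Finset.sum_add_distrib, ← Finset.mul_sum,
      sum_complMatrix_mul_self hV, sum_inclMatrix_one_transpose_mul_self hV hm, Finset.sum_const,
      Finset.card_univ, nsmul_eq_mul, mul_comm (Fintype.card _ : ℝ)]
    exact sq_sub_complCount_mul_le hq hm (card_subspaceOfDim_mul_prod hV)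

/-- Tokushige's bound for cross-intersecting families, in the case of half-dimensional subspaces. -/
theorem ncard_mul_ncard_le_of_crossIntersecting (hm : 0 < m) {S T : Set (Submodule F V)}
    (hS : ∀ A ∈ S, finrank F A = m) (hT : ∀ B ∈ T, finrank F B = m)
    (hST : CrossIntersecting S T) :
    (S.ncard * T.ncard : ℚ) ≤ gaussBinom (Fintype.card F) (2 * m - 1) (m - 1) ^ 2 := by
  classical
  let members (S : Set (Submodule F V)) : Finset (SubspaceOfDim F V m) := {A | A.1 ∈ S}
  have hmem (S) (A : SubspaceOfDim F V m) : A ∈ members S ↔ A.1 ∈ S := Finset.mem_filter_univ A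
  have hcard {S : Set (Submodule F V)} (hS : ∀ A ∈ S, finrank F A = m) :
      S.ncard = (members S).card := by
    rw [← Set.ncard_coe_finset, ← Set.ncard_image_of_injective _ Subtype.val_injective]
    congr 1
    ext A
    simpa [members] using fun hA => hS A hA
  have hbound := card_mul_card_le (S := members S) (T := members T) complMatrix_isSymm
    (lam := (Fintype.card F : ℝ) ^ (m * m) / (Fintype.card F : ℝ) ^ m)
    (Q := (Fintype.card F : ℝ) ^ m) (by positivity) (by positivity)
    (by rw [complMatrix_mulVec_one hV, div_mul_cancel₀ _ (by positivity)])
    (fun x hx => dotProduct_self_complMatrix_mulVec_le hV hm hx) fun A hA B hB =>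
      complMatrix_apply_eq_zero (hST _ ((hmem _ _).1 hA) _ ((hmem _ _).1 hB))
  have hbound' : ((Fintype.card F : ℚ) ^ m + 1) ^ 2 * (S.ncard * T.ncard)
      ≤ (Fintype.card (SubspaceOfDim F V m) : ℚ) ^ 2 := by
    rw [hcard hS, hcard hT]
    exact_mod_cast hbound
  rw [card_subspaceOfDim hV hm, mul_pow, mul_comm] at hbound'
  exact le_of_mul_le_mul_right hbound' (by positivity)

end Finite

end CrossIntersecting

section Families

variable {F V : Type*} [Field F] [AddCommGroup V] [Module F V]

/-- The members of the family `Y` that contain `W`. -/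
def through (Y : Set (Submodule F V)) (W : Submodule F V) : Set (Submodule F V) :=
  {R ∈ Y | W ≤ R}

theorem through_bot (Y : Set (Submodule F V)) : through Y ⊥ = Y :=
  Set.sep_eq_self_iff_mem_true.2 fun _ _ => bot_le

theorem through_inter_through (Y : Set (Submodule F V)) (P Q : Submodule F V) :
    through Y P ∩ through Y Q = through Y (P ⊔ Q) :=
  Set.ext fun _ => ⟨fun h => ⟨h.1.1, sup_le h.1.2 h.2.2⟩, fun h =>
    ⟨⟨h.1, le_sup_left.trans h.2⟩, h.1, le_sup_right.trans h.2⟩⟩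

theorem finrank_sup_of_disjoint [FiniteDimensional F V] {A B : Submodule F V} (h : Disjoint A B) :
    finrank F (A ⊔ B : Submodule F V) = finrank F A + finrank F B := by
  rw [← Submodule.finrank_sup_add_finrank_inf_eq, h.eq_bot, finrank_bot, add_zero]

theorem disjoint_of_finrank_eq_one {P W : Submodule F V} (hP : finrank F P = 1) (h : ¬P ≤ W) :
    Disjoint P W :=
  (Submodule.isAtom_iff_finrank_eq_one.2 hP).not_le_iff_disjoint.1 h

theorem disjoint_of_finrank_eq_one_of_ne {P Q : Submodule F V} (hP : finrank F P = 1)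
    (hQ : finrank F Q = 1) (h : P ≠ Q) : Disjoint P Q :=
  (Submodule.isAtom_iff_finrank_eq_one.2 hP).disjoint_of_ne
    (Submodule.isAtom_iff_finrank_eq_one.2 hQ) h

theorem sup_inf_eq_of_le_of_disjoint {α : Type*} [Lattice α] [OrderBot α] [IsModularLattice α]
    {P Q R : α} (hPR : P ≤ R) (hQR : Disjoint Q R) : (P ⊔ Q) ⊓ R = P := by
  rw [sup_inf_assoc_of_le Q hPR, hQR.eq_bot, sup_bot_eq]

theorem disjoint_of_mem_through_diff {Y : Set (Submodule F V)} {P Q R : Submodule F V}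
    (hQ : finrank F Q = 1) (hR : R ∈ through Y P \ through Y Q) : Disjoint Q R :=
  disjoint_of_finrank_eq_one hQ fun h => hR.2 ⟨hR.1.1, h⟩

theorem finrank_map_mkQ_sup [FiniteDimensional F V] {P Q R : Submodule F V} (hPR : P ≤ R)
    (hQR : Disjoint Q R) : finrank F (R.map (P ⊔ Q).mkQ) + finrank F P = finrank F R := by
  have hdisj : Disjoint P Q := (hQR.mono_right hPR).symm
  have hmap : (R ⊔ Q).map (P ⊔ Q).mkQ = R.map (P ⊔ Q).mkQ := by
    have hQ : Q.map (P ⊔ Q).mkQ = ⊥ :=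
      le_bot_iff.1 ((Submodule.map_mono le_sup_right).trans_eq (Submodule.mkQ_map_self _))
    rw [Submodule.map_sup, hQ, sup_bot_eq]
  have h := finrank_map_mkQ_add (sup_le_sup_right hPR Q)
  rw [hmap, finrank_sup_of_disjoint hdisj, finrank_sup_of_disjoint hQR.symm] at h
  omega

theorem crossIntersecting_image_map_mkQ {Y : Set (Submodule F V)} (hY : CrossIntersecting Y Y)
    {P Q : Submodule F V} (hP : finrank F P = 1) (hQ : finrank F Q = 1) (hPQ : P ≠ Q) :
    CrossIntersecting (Submodule.map (P ⊔ Q).mkQ '' (through Y P \ through Y Q))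
      (Submodule.map (P ⊔ Q).mkQ '' (through Y Q \ through Y P)) := by
  rintro _ ⟨R, hR, rfl⟩ _ ⟨R', hR', rfl⟩ hbot
  have hle : R ⊓ R' ≤ P ⊔ Q := by
    have hmap := (Submodule.map_inf_le (P ⊔ Q).mkQ).trans_eq hbot
    rwa [Submodule.map_le_iff_le_comap, Submodule.comap_bot, Submodule.ker_mkQ] at hmap
  have hR_inf : (P ⊔ Q) ⊓ R = P :=
    sup_inf_eq_of_le_of_disjoint hR.1.2 (disjoint_of_mem_through_diff hQ hR)
  have hR'_inf : (P ⊔ Q) ⊓ R' = Q :=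
    sup_comm P Q ▸ sup_inf_eq_of_le_of_disjoint hR'.1.2 (disjoint_of_mem_through_diff hP hR')
  refine hY R hR.1.1 R' hR'.1.1 (le_bot_iff.1 ?_)
  calc R ⊓ R' ≤ ((P ⊔ Q) ⊓ R) ⊓ ((P ⊔ Q) ⊓ R') :=
        le_inf (le_inf hle inf_le_left) (le_inf hle inf_le_right)
    _ = P ⊓ Q := by rw [hR_inf, hR'_inf]
    _ = ⊥ := (disjoint_of_finrank_eq_one_of_ne hP hQ hPQ).eq_bot

theorem ncard_le_mul_ncard_image {α β : Type*} {s : Set α} (hs : s.Finite) (f : α → β) (n : ℕ)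
    (h : ∀ b ∈ f '' s, {a ∈ s | f a = b}.ncard ≤ n) : s.ncard ≤ n * (f '' s).ncard := by
  classical
  lift s to Finset α using hs
  rw [← Finset.coe_image, Set.ncard_coe_finset, Set.ncard_coe_finset]
  refine Finset.card_le_mul_card_image s n fun b hb => ?_
  rw [← Set.ncard_coe_finset, Finset.coe_filter]
  exact h b (by simpa using hb)

variable [Finite V] {k : ℕ}

section Points

/-- The points (one-dimensional subspaces) of `S`. -/
noncomputable def points (S : Submodule F V) : Finset (Submodule F V) :=
  (Set.toFinite {P : Submodule F V | finrank F P = 1 ∧ P ≤ S}).toFinset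

theorem mem_points {S P : Submodule F V} : P ∈ points S ↔ finrank F P = 1 ∧ P ≤ S :=
  Set.Finite.mem_toFinset _

theorem points_nonempty {S : Submodule F V} (hS : S ≠ ⊥) : (points S).Nonempty := by
  obtain ⟨P, hP, hPS⟩ := (eq_bot_or_exists_atom_le S).resolve_left hS
  exact ⟨P, mem_points.2 ⟨Submodule.isAtom_iff_finrank_eq_one.1 hP, hPS⟩⟩

theorem card_points [Fintype F] (S : Submodule F V) :
    ((points S).card : ℚ) = gaussBinom (Fintype.card F) (finrank F S) 1 := by
  rw [← ncard_finrank_eq_of_le, Set.ncard_eq_toFinset_card _ (Set.toFinite _)]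
  rfl

theorem ncard_through_le_sum {Y : Set (Submodule F V)} {S : Submodule F V}
    (hS : ∀ R ∈ Y, S ⊓ R ≠ ⊥) (W : Submodule F V) :
    (through Y W).ncard ≤ ∑ P ∈ points S, (through Y (W ⊔ P)).ncard := by
  refine (Set.ncard_le_ncard (fun R hR => ?_) (Set.toFinite _)).trans
    (Finset.set_ncard_biUnion_le _ _)
  obtain ⟨P, hP⟩ := points_nonempty (hS R hR.1)
  obtain ⟨hP1, hPle⟩ := mem_points.1 hP
  exact Set.mem_biUnion (mem_points.2 ⟨hP1, hPle.trans inf_le_left⟩)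
    ⟨hR.1, sup_le hR.2 (hPle.trans inf_le_right)⟩

variable [Fintype F]

theorem ncard_through_le {Y : Set (Submodule F V)} (hdim : ∀ R ∈ Y, finrank F R = k)
    {W : Submodule F V} (hW : finrank F W ≤ k) : ((through Y W).ncard : ℚ)
      ≤ gaussBinom (Fintype.card F) (finrank F V - finrank F W) (k - finrank F W) := by
  rw [← ncard_finrank_eq_of_ge hW]
  exact Nat.cast_le.2 (Set.ncard_le_ncard fun R hR => ⟨hdim R hR.1, hR.2⟩)

theorem ncard_through_le_of_disjoint {Y : Set (Submodule F V)} {S W : Submodule F V}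
    (hS : ∀ R ∈ Y, S ⊓ R ≠ ⊥) (hWS : Disjoint W S) {M : ℚ}
    (hM : ∀ X : Submodule F V, finrank F X = finrank F W + 1 → ((through Y X).ncard : ℚ) ≤ M) :
    ((through Y W).ncard : ℚ) ≤ gaussBinom (Fintype.card F) (finrank F S) 1 * M := by
  rw [← card_points, ← nsmul_eq_mul]
  refine (Nat.cast_le.2 (ncard_through_le_sum hS W)).trans ?_
  rw [Nat.cast_sum]
  refine Finset.sum_le_card_nsmul _ _ _ fun P hP => hM _ ?_
  obtain ⟨hP1, hPS⟩ := mem_points.1 hP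
  rw [finrank_sup_of_disjoint (hWS.mono_right hPS), hP1]

theorem sum_le_add_card_sub_one_mul {ι : Type*} {s : Finset ι} (hs : s.Nonempty) {f : ι → ℚ}
    {B E : ℚ} (hB : ∀ a ∈ s, f a ≤ B) (hE : ∀ a ∈ s, ∀ b ∈ s, a ≠ b → f a ≤ E ∨ f b ≤ E) :
    ∑ a ∈ s, f a ≤ B + (s.card - 1) * E := by
  classical
  obtain ⟨a, ha, hmax⟩ := s.exists_max_image f hs
  have hrest : ∀ b ∈ s.erase a, f b ≤ E := fun b hb => by
    obtain ⟨hba, hb⟩ := Finset.mem_erase.1 hb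
    exact (hE a ha b hb hba.symm).elim (hmax b hb).trans id
  have hcard : ((s.erase a).card : ℚ) = s.card - 1 := by
    rw [Finset.card_erase_of_mem ha, Nat.cast_pred hs.card_pos]
  rw [← Finset.add_sum_erase s f ha, ← hcard, ← nsmul_eq_mul]
  exact add_le_add (hB a ha) (Finset.sum_le_card_nsmul _ _ _ hrest)

theorem ncard_le_of_forall_inf_ne_bot {Y : Set (Submodule F V)} {S : Submodule F V} (hS : S ≠ ⊥)
    (hcov : ∀ R ∈ Y, S ⊓ R ≠ ⊥) {B E : ℚ}
    (hB : ∀ P : Submodule F V, finrank F P = 1 → ((through Y P).ncard : ℚ) ≤ B)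
    (hE : ∀ P Q : Submodule F V, finrank F P = 1 → finrank F Q = 1 → P ≠ Q →
      ((through Y P).ncard : ℚ) ≤ E ∨ ((through Y Q).ncard : ℚ) ≤ E) :
    (Y.ncard : ℚ) ≤ B + (gaussBinom (Fintype.card F) (finrank F S) 1 - 1) * E := by
  have hsum := ncard_through_le_sum hcov ⊥
  simp only [bot_sup_eq, through_bot] at hsum
  rw [← card_points]
  refine (Nat.cast_le.2 hsum).trans ?_
  rw [Nat.cast_sum]
  exact sum_le_add_card_sub_one_mul (points_nonempty hS) (fun P hP => hB P (mem_points.1 hP).1)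
    fun P hP Q hQ => hE P Q (mem_points.1 hP).1 (mem_points.1 hQ).1

end Points

theorem finrank_eq_of_mem_image_map_mkQ {Y : Set (Submodule F V)} (hdim : ∀ R ∈ Y, finrank F R = k)
    {P Q : Submodule F V} (hP : finrank F P = 1) (hQ : finrank F Q = 1) :
    ∀ A ∈ Submodule.map (P ⊔ Q).mkQ '' (through Y P \ through Y Q), finrank F A = k - 1 := by
  rintro _ ⟨R, hR, rfl⟩
  have := finrank_map_mkQ_sup hR.1.2 (disjoint_of_mem_through_diff hQ hR)
  rw [hP, hdim R hR.1.1] at this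
  exact Nat.eq_sub_of_add_eq this

variable [Fintype F]

theorem ncard_relative_isCompl_ge_mul {P Q X : Submodule F V} (hP : P ≤ X) (hQ : Q ≤ X)
    (hQP : Disjoint Q P) :
    {R | P ≤ R ∧ Disjoint Q R ∧ Q ⊔ R = X}.ncard
        * Fintype.card F ^ ((finrank F Q + finrank F P) * finrank F Q)
      = Fintype.card F ^ (finrank F X * finrank F Q) := by
  have hmap {W : Submodule F V} (hW : W ≤ X) : (W.comap X.subtype).map X.subtype = W := by
    rw [Submodule.map_comap_subtype, inf_eq_right.2 hW]
  have hcompl (B : Submodule F X) : IsCompl (Q.comap X.subtype) B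
      ↔ Disjoint Q (B.map X.subtype) ∧ Q ⊔ B.map X.subtype = X := by
    have h := (Submodule.mapIic X).isCompl_iff.trans
      (Set.Iic.isCompl_iff (x := X.mapIic (Q.comap X.subtype)) (y := X.mapIic B))
    rwa [Submodule.coe_mapIic_apply, Submodule.coe_mapIic_apply, hmap hQ] at h
  have hset : {R | P ≤ R ∧ Disjoint Q R ∧ Q ⊔ R = X} = Submodule.map X.subtype ''
      {B | IsCompl (Q.comap X.subtype) B ∧ P.comap X.subtype ≤ B} := by
    simp only [hcompl, ← Submodule.map_le_map_iff_of_injective X.injective_subtype, hmap hP]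
    ext R
    constructor
    · rintro ⟨hPR, hQR, hsup⟩
      have hR : (R.comap X.subtype).map X.subtype = R := hmap (hsup ▸ le_sup_right)
      exact ⟨R.comap X.subtype, by rw [Set.mem_ofPred_eq, hR]; exact ⟨⟨hQR, hsup⟩, hPR⟩, hR⟩
    · rintro ⟨B, ⟨hB, hPB⟩, rfl⟩
      exact ⟨hPB, hB⟩
  have hdisj : Disjoint (Q.comap X.subtype) (P.comap X.subtype) := by
    rw [disjoint_iff, ← Submodule.comap_inf, hQP.eq_bot, Submodule.comap_bot, Submodule.ker_subtype]
  have hcount := ncard_isCompl_ge_mul hdisj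
  rwa [(Submodule.comapSubtypeEquivOfLe hQ).finrank_eq,
    (Submodule.comapSubtypeEquivOfLe hP).finrank_eq, ← Set.ncard_image_of_injective _
      (Submodule.map_injective_of_injective X.injective_subtype), ← hset] at hcount

theorem ncard_through_diff_le {Y : Set (Submodule F V)} (hdim : ∀ R ∈ Y, finrank F R = k)
    {P Q : Submodule F V} (hP : finrank F P = 1) (hQ : finrank F Q = 1) (hPQ : P ≠ Q) :
    (through Y P \ through Y Q).ncard ≤ Fintype.card F ^ (k - 1)
      * (Submodule.map (P ⊔ Q).mkQ '' (through Y P \ through Y Q)).ncard := by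
  refine ncard_le_mul_ncard_image (Set.toFinite _) _ _ ?_
  rintro _ ⟨R₀, hR₀, rfl⟩
  have hsup (R) (hR : R ∈ through Y P) : Q ⊔ R = (R.map (P ⊔ Q).mkQ).comap (P ⊔ Q).mkQ := by
    rw [Submodule.comap_map_mkQ, sup_right_comm, sup_eq_right.2 hR.2, sup_comm]
  have hdisj := disjoint_of_mem_through_diff hQ hR₀
  have hcount := ncard_relative_isCompl_ge_mul (hR₀.1.2.trans le_sup_right) le_sup_left
    (disjoint_of_finrank_eq_one_of_ne hQ hP hPQ.symm) (X := Q ⊔ R₀)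
  rw [finrank_sup_of_disjoint hdisj, hdim R₀ hR₀.1.1, hP, hQ] at hcount
  obtain ⟨l, hl⟩ : ∃ l, k = l + 1 := Nat.exists_eq_add_one.2 <|
    (hP.symm.trans_le (Submodule.finrank_mono hR₀.1.2)).trans_eq (hdim R₀ hR₀.1.1)
  rw [hl, Nat.add_sub_cancel]
  refine le_of_mul_le_mul_right ?_ (pow_pos (Fintype.card_pos (α := F)) ((1 + 1) * 1))
  rw [← pow_add, show l + (1 + 1) * 1 = (1 + k) * 1 by omega, ← hcount]
  refine Nat.mul_le_mul_right _ (Set.ncard_le_ncard fun R ⟨hR, hmap⟩ =>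
    ⟨hR.1.2, disjoint_of_mem_through_diff hQ hR, ?_⟩)
  rw [hsup R hR.1, hmap, hsup R₀ hR₀.1]

theorem ncard_through_le_mul_add {Y : Set (Submodule F V)} (hdim : ∀ R ∈ Y, finrank F R = k)
    (hk : 2 ≤ k) {P Q : Submodule F V} (hP : finrank F P = 1) (hQ : finrank F Q = 1)
    (hPQ : P ≠ Q) : ((through Y P).ncard : ℚ)
      ≤ (Fintype.card F : ℚ) ^ (k - 1)
          * (Submodule.map (P ⊔ Q).mkQ '' (through Y P \ through Y Q)).ncard
        + gaussBinom (Fintype.card F) (finrank F V - 2) (k - 2) := by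
  have hrank : finrank F (P ⊔ Q : Submodule F V) = 2 := by
    rw [finrank_sup_of_disjoint (disjoint_of_finrank_eq_one_of_ne hP hQ hPQ), hP, hQ]
  have hboth := ncard_through_le hdim (hrank.trans_le hk)
  rw [hrank] at hboth
  rw [← Set.ncard_inter_add_ncard_sdiff_eq_ncard _ (through Y Q) (Set.toFinite _),
    through_inter_through, add_comm, Nat.cast_add]
  exact add_le_add (mod_cast ncard_through_diff_le hdim hP hQ hPQ) hboth

/-- A bound on the number of members of an intersecting family of `k`-spaces of a `2k`-space through
the poorer of two distinct points: `q^(k-1)` times Tokushige's bound in dimension `2(k-1)`, for the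
members through that point only, plus the number of `k`-spaces through both points. -/
def secondPointBound (q k : ℕ) : ℚ :=
  (q : ℚ) ^ (k - 1) * gaussBinom q (2 * k - 3) (k - 2) + gaussBinom q (2 * k - 2) (k - 2)

theorem ncard_through_le_or (hk : 2 ≤ k) (hV : finrank F V = 2 * k) {Y : Set (Submodule F V)}
    (hdim : ∀ R ∈ Y, finrank F R = k) (hint : CrossIntersecting Y Y)
    {P Q : Submodule F V} (hP : finrank F P = 1) (hQ : finrank F Q = 1) (hPQ : P ≠ Q) :
    ((through Y P).ncard : ℚ) ≤ secondPointBound (Fintype.card F) k ∨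
      ((through Y Q).ncard : ℚ) ≤ secondPointBound (Fintype.card F) k := by
  have : Finite (V ⧸ P ⊔ Q) := Quotient.finite _
  have hrank : finrank F (V ⧸ P ⊔ Q) = 2 * (k - 1) := by
    rw [Submodule.finrank_quotient, hV,
      finrank_sup_of_disjoint (disjoint_of_finrank_eq_one_of_ne hP hQ hPQ), hP, hQ]
    omega
  have hPle := ncard_through_le_mul_add hdim hk hP hQ hPQ
  have hQle := ncard_through_le_mul_add hdim hk hQ hP hPQ.symm
  have hdimQ := finrank_eq_of_mem_image_map_mkQ hdim hQ hP
  rw [sup_comm Q P] at hQle hdimQ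
  have hprod := ncard_mul_ncard_le_of_crossIntersecting hrank (by omega)
    (finrank_eq_of_mem_image_map_mkQ hdim hP hQ) hdimQ
    (crossIntersecting_image_map_mkQ hint hP hQ hPQ)
  rw [show 2 * (k - 1) - 1 = 2 * k - 3 by omega, show k - 1 - 1 = k - 2 by omega] at hprod
  rw [hV] at hPle hQle
  have hpos : 0 < gaussBinom (Fintype.card F) (2 * k - 3) (k - 2) :=
    gaussBinom_pos Fintype.one_lt_card (by omega)
  have hor : ((Submodule.map (P ⊔ Q).mkQ '' (through Y P \ through Y Q)).ncard : ℚ)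
        ≤ gaussBinom (Fintype.card F) (2 * k - 3) (k - 2) ∨
      ((Submodule.map (P ⊔ Q).mkQ '' (through Y Q \ through Y P)).ncard : ℚ)
        ≤ gaussBinom (Fintype.card F) (2 * k - 3) (k - 2) := by
    by_contra! h
    exact ((mul_lt_mul'' h.1 h.2 hpos.le hpos.le).trans_le hprod).ne (sq _).symm
  refine hor.imp (fun h => hPle.trans ?_) fun h => hQle.trans ?_ <;>
    exact add_le_add_left (mul_le_mul_of_nonneg_left h (by positivity)) _

end Families

section Numerics

variable {q u K D : ℚ}

theorem mul_add_mul_lt_of_sq_le (hq : 2 ≤ q) (hu : q ^ 2 ≤ u)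
    (hK : K * (q - 1) = q ^ 2 * u - 1) (hD : D = q ^ 2 * u ^ 2 - 1) :
    K * D + q * (q * u * (q ^ 2 * u - 1) + D) < (1 + 3 / q) * K * D := by
  have hu4 : 4 ≤ u := by nlinarith
  have hqu : q ^ 2 * q ^ 2 ≤ q ^ 2 * u := by gcongr
  have hK_ge : q ^ 2 ≤ K := by
    refine le_of_mul_le_mul_right (a := q - 1) ?_ (by linarith)
    nlinarith
  have hD_pos : 0 < D := by nlinarith
  have hcross : q ^ 3 * u * (q ^ 2 * u - 1) ≤ K * D := by
    have hcoef : q ^ 3 * u * (q - 1) ≤ D := by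
      nlinarith [mul_le_mul_of_nonneg_right hqu (by linarith : 0 ≤ u)]
    calc q ^ 3 * u * (q ^ 2 * u - 1) = K * (q ^ 3 * u * (q - 1)) := by rw [← hK]; ring
      _ ≤ K * D := mul_le_mul_of_nonneg_left hcoef (by nlinarith)
  have hlast : q ^ 2 * D ≤ K * D := by gcongr
  have hKD : 0 < K * D := mul_pos (by nlinarith) hD_pos
  have hsplit : (1 + 3 / q) * K * D = (q * (K * D) + 3 * (K * D)) / q := by field_simp
  rw [hsplit, lt_div_iff₀ (by linarith)]
  linarith

theorem mul_add_mul_lt_of_mul_le {c : ℚ} (hq : 2 ≤ q) (hu : 1 < u)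
    (hK : K * (q - 1) = q ^ 2 * u - 1) (hD : D = q ^ 2 * u ^ 2 - 1)
    (hc : c * (q - 1) ≤ q * (u - 1)) :
    K * K * (u - 1) + c * (q * u * (q ^ 2 * u - 1) + D) < (1 + 3 / q) * K * D := by
  have hqu : 4 * u ≤ q ^ 2 * u := by gcongr; nlinarith
  have hK_pos : 0 < K := by
    refine pos_of_mul_pos_left (b := q - 1) ?_ (by linarith)
    linarith
  have hmain : K * (u - 1) * q < 2 * D := by
    have hlt : K * (u - 1) * (q - 1) < D := by nlinarith
    nlinarith [mul_pos hK_pos (sub_pos.2 hu)]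
  have hcross : c * (q * u * (q ^ 2 * u - 1)) ≤ K * D := by
    have hcoef : c * (q - 1) * (q * u) ≤ D := by
      nlinarith [mul_le_mul_of_nonneg_right hc (by nlinarith : 0 ≤ q * u)]
    calc c * (q * u * (q ^ 2 * u - 1)) = K * (c * (q - 1) * (q * u)) := by rw [← hK]; ring
      _ ≤ K * D := mul_le_mul_of_nonneg_left hcoef hK_pos.le
  have hlast : c * q * D ≤ K * D := by
    have hle : c * q ≤ K := by
      refine le_of_mul_le_mul_right (a := q - 1) ?_ (by linarith)
      nlinarith
    exact mul_le_mul_of_nonneg_right hle (by nlinarith)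
  have hsplit : (1 + 3 / q) * K * D = (q * (K * D) + 3 * (K * D)) / q := by field_simp
  rw [hsplit, lt_div_iff₀ (by linarith)]
  nlinarith [mul_lt_mul_of_pos_left hmain hK_pos]

theorem exists_gaussBinom_eq_mul {q k : ℕ} (hq : 1 < q) (hk : 3 ≤ k) : ∃ x : ℚ, 0 < x ∧
    gaussBinom q (2 * k - 3) (k - 3) = x * ((q : ℚ) ^ (k - 2) - 1) ∧
    gaussBinom q (2 * k - 3) (k - 2) = x * ((q : ℚ) ^ 2 * q ^ (k - 2) - 1) ∧
    gaussBinom q (2 * k - 2) (k - 2) = x * ((q : ℚ) ^ 2 * (q ^ (k - 2)) ^ 2 - 1) := by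
  obtain ⟨j, rfl⟩ := Nat.exists_eq_add_of_le' hk
  have hpos : 0 < (q : ℚ) ^ (j + 1) - 1 := sub_pos.2 (one_lt_pow₀ (mod_cast hq) j.succ_ne_zero)
  have hright := gaussBinom_succ_right_mul hq (2 * j + 3) j
  have hsucc := gaussBinom_succ_succ_mul hq (2 * j + 3) j
  refine ⟨gaussBinom q (2 * j + 3) j / (q ^ (j + 1) - 1),
    div_pos (gaussBinom_pos hq (by omega)) hpos, ?_, ?_, ?_⟩
  · exact (div_mul_cancel₀ _ hpos.ne').symm
  · rw [div_mul_eq_mul_div, eq_div_iff hpos.ne', ← pow_add]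
    convert hright using 4 <;> omega
  · rw [div_mul_eq_mul_div, eq_div_iff hpos.ne', ← pow_mul, ← pow_add]
    convert hsucc using 4 <;> omega

variable {q k : ℕ}

theorem pow_pred_eq_mul_pow_sub_two {q : ℚ} (hk : 2 ≤ k) : q ^ (k - 1) = q * q ^ (k - 2) := by
  rw [← pow_succ']
  congr 1
  omega

theorem gaussBinom_mul_add_lt (hq : 1 < q) (hk : 4 ≤ k) :
    gaussBinom q k 1 * gaussBinom q (2 * k - 2) (k - 2)
        + (gaussBinom q 2 1 - 1) * secondPointBound q k
      < (1 + 3 / (q : ℚ)) * gaussBinom q k 1 * gaussBinom q (2 * k - 2) (k - 2) := by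
  obtain ⟨x, hx, -, hx₁, hx₂⟩ := exists_gaussBinom_eq_mul hq (by omega : 3 ≤ k)
  have hq2 : (2 : ℚ) ≤ q := mod_cast hq
  have hu : (q : ℚ) ^ 2 ≤ (q : ℚ) ^ (k - 2) := pow_le_pow_right₀ (by linarith) (by omega)
  have hK : gaussBinom q k 1 * ((q : ℚ) - 1) = q ^ 2 * q ^ (k - 2) - 1 := by
    rw [gaussBinom_one_mul hq, ← pow_add, Nat.add_sub_cancel' (by omega)]
  have hline : gaussBinom q 2 1 - 1 = q := by
    refine mul_right_cancel₀ (b := (q : ℚ) - 1) (by linarith) ?_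
    linear_combination gaussBinom_one_mul hq 2
  have hlt := mul_lt_mul_of_pos_left (mul_add_mul_lt_of_sq_le hq2 hu hK rfl) hx
  rw [hline, secondPointBound, pow_pred_eq_mul_pow_sub_two (by omega), hx₁, hx₂]
  linarith

theorem gaussBinom_mul_mul_add_lt {s : ℕ} (hq : 1 < q) (hk : 3 ≤ k) (hs : s < k) :
    gaussBinom q k 1 * (gaussBinom q k 1 * gaussBinom q (2 * k - 3) (k - 3))
        + (gaussBinom q s 1 - 1) * secondPointBound q k
      < (1 + 3 / (q : ℚ)) * gaussBinom q k 1 * gaussBinom q (2 * k - 2) (k - 2) := by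
  obtain ⟨x, hx, hx₀, hx₁, hx₂⟩ := exists_gaussBinom_eq_mul hq hk
  have hq2 : (2 : ℚ) ≤ q := mod_cast hq
  have hu : 1 < (q : ℚ) ^ (k - 2) := one_lt_pow₀ (by linarith) (by omega)
  have hK : gaussBinom q k 1 * ((q : ℚ) - 1) = q ^ 2 * q ^ (k - 2) - 1 := by
    rw [gaussBinom_one_mul hq, ← pow_add, Nat.add_sub_cancel' (by omega)]
  have hs_le : (gaussBinom q s 1 - 1) * ((q : ℚ) - 1) ≤ q * (q ^ (k - 2) - 1) := by
    have hpow : (q : ℚ) ^ s ≤ q ^ (k - 1) := pow_le_pow_right₀ (by linarith) (by omega)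
    rw [pow_pred_eq_mul_pow_sub_two (by omega)] at hpow
    linarith [gaussBinom_one_mul hq s]
  have hlt := mul_lt_mul_of_pos_left (mul_add_mul_lt_of_mul_le hq2 hu hK rfl hs_le) hx
  rw [secondPointBound, pow_pred_eq_mul_pow_sub_two (by omega), hx₀, hx₁, hx₂]
  linarith

end Numerics

section Main

variable {F V : Type*} [Field F] [Fintype F] [AddCommGroup V] [Module F V] {k : ℕ}

theorem ncard_lt_of_minimal_cover [Finite V] (hk : 4 ≤ k) (hV : finrank F V = 2 * k)
    {Y : Set (Submodule F V)} (hdim : ∀ R ∈ Y, finrank F R = k) (hint : CrossIntersecting Y Y)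
    {S : Submodule F V} (hcov : ∀ R ∈ Y, S ⊓ R ≠ ⊥) (hS : 2 ≤ finrank F S) (hSk : finrank F S < k)
    (hmin : ∀ W : Submodule F V, finrank F W < finrank F S → ∃ R ∈ Y, W ⊓ R = ⊥) :
    (Y.ncard : ℚ) < (1 + 3 / (Fintype.card F : ℚ)) * gaussBinom (Fintype.card F) k 1
      * gaussBinom (Fintype.card F) (2 * k - 2) (k - 2) := by
  have hq : 1 < Fintype.card F := Fintype.one_lt_card
  have hS_ne : S ≠ ⊥ := by
    rintro rfl
    simp at hS
  have hstep {W : Submodule F V} (hW : finrank F W < finrank F S) {M : ℚ}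
      (hM : ∀ X : Submodule F V, finrank F X = finrank F W + 1 → ((through Y X).ncard : ℚ) ≤ M) :
      ((through Y W).ncard : ℚ) ≤ gaussBinom (Fintype.card F) k 1 * M := by
    obtain ⟨R, hR, hWR⟩ := hmin W hW
    rw [← hdim R hR]
    exact ncard_through_le_of_disjoint (hint R hR) (disjoint_iff.2 hWR) hM
  have hcover (B : ℚ) (hB : ∀ P : Submodule F V, finrank F P = 1 →
      ((through Y P).ncard : ℚ) ≤ B) :=
    ncard_le_of_forall_inf_ne_bot hS_ne hcov hB fun P Q hP hQ hPQ =>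
      ncard_through_le_or (by omega) hV hdim hint hP hQ hPQ
  rcases hS.eq_or_lt with hS2 | hS3
  · simp only [← hS2] at hcover
    refine (hcover _ fun P hP => hstep (by omega) fun X hX => ?_).trans_lt
      (gaussBinom_mul_add_lt hq hk)
    have hXle := ncard_through_le hdim (W := X) (by omega)
    rwa [hV, hX, hP] at hXle
  · refine (hcover _ fun P hP => hstep (by omega) fun L hL => hstep (by omega)
      fun X hX => ?_).trans_lt
      (gaussBinom_mul_mul_add_lt hq (by omega) hSk)
    have hXle := ncard_through_le hdim (W := X) (by omega)
    rwa [hV, hX, hL, hP] at hXle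

theorem min_covering_dimension_general (hk : 4 ≤ k) (hV : finrank F V = 2 * k)
    (Y : Set (Submodule F V)) (hdim : ∀ R ∈ Y, finrank F R = k)
    (hint : ∀ R ∈ Y, ∀ S ∈ Y, R ⊓ S ≠ ⊥)
    (hsize : (Nat.card Y : ℚ) ≥ (1 + 3 / (Fintype.card F : ℚ)) * gaussBinom (Fintype.card F) k 1
      * gaussBinom (Fintype.card F) (2 * k - 2) (k - 2))
    (s : ℕ) (hs : IsLeast {d : ℕ | ∃ S : Submodule F V, finrank F S = d ∧ ∀ R ∈ Y, S ⊓ R ≠ ⊥} s) :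
    s = 1 ∨ s = k := by
  have : FiniteDimensional F V := Module.finite_of_finrank_pos (by omega)
  have : Finite V := Module.finite_of_finite F
  have hq : 1 < Fintype.card F := Fintype.one_lt_card
  obtain ⟨⟨S, rfl, hcov⟩, hleast⟩ := hs
  obtain ⟨R₀, hR₀⟩ : Y.Nonempty := by
    rw [Set.nonempty_iff_ne_empty]
    rintro rfl
    have hK := gaussBinom_pos hq (by omega : 1 ≤ k)
    have hM := gaussBinom_pos hq (by omega : k - 2 ≤ 2 * k - 2)
    rw [Nat.card_of_isEmpty, Nat.cast_zero] at hsize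
    exact hsize.not_gt (by positivity)
  have hle : finrank F S ≤ k := hleast ⟨R₀, hdim R₀ hR₀, hint R₀ hR₀⟩
  have hpos : finrank F S ≠ 0 := fun h =>
    hcov R₀ hR₀ (by rw [Submodule.finrank_eq_zero.1 h, bot_inf_eq])
  by_contra! hne
  refine hsize.not_gt (ncard_lt_of_minimal_cover hk hV hdim hint hcov (by omega) (by omega) ?_)
  intro W hW
  by_contra! hW_cov
  exact hW.not_ge (hleast ⟨W, rfl, hW_cov⟩)

end Main

/-- Lemma 3.5: for `q ≥ 3, k ≥ 5` (or `q ≥ 5, k ≥ 6`), if `Y` is an intersecting family of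
`k`-spaces of `F_q^{2k}` of size at least `(1 + 3q^{-1})·[k choose 1]_q·[2k-2 choose k-2]_q`,
and `s` is the minimum dimension of a subspace meeting every member of `Y` nontrivially,
then `s = 1` or `s = k`. -/
theorem min_covering_dimension (q k : ℕ) (hq : IsPrimePow q)
    (hqk : (3 ≤ q ∧ 5 ≤ k) ∨ (5 ≤ q ∧ 6 ≤ k))
    (F : Type) [Field F] [Fintype F] (hF : Fintype.card F = q)
    (Y : Set (Submodule F (Fin (2 * k) → F)))
    (hdim : ∀ R ∈ Y, Module.finrank F R = k)
    (hint : ∀ R ∈ Y, ∀ S ∈ Y, R ⊓ S ≠ ⊥)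
    (hsize : (Nat.card Y : ℚ) ≥
      (1 + 3 / (q : ℚ)) * gaussBinom q k 1 * gaussBinom q (2 * k - 2) (k - 2))
    (s : ℕ)
    (hs : IsLeast {d : ℕ | ∃ S : Submodule F (Fin (2 * k) → F),
      Module.finrank F S = d ∧ ∀ R ∈ Y, S ⊓ R ≠ ⊥} s) :
    s = 1 ∨ s = k := by
  subst hF
  exact min_covering_dimension_general (by omega) (finrank_fin_fun F) Y hdim hint hsize s hs
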